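/- Let K be a regular kernel with constants b, ρ, κ₀ that moreover satisfies the tail bound K(z) ≤ C_K·exp(−‖z‖^α) for all z ∈ ℝ^M with ‖z‖ ≥ R_K, for some constants α, R_K, C_K > 0. Assume |Y| ≤ R almost surely and ‖r(x)‖ ≤ R for all x ∈ ℝ^d, for some constant R > 0, and assume there exist L ≥ 0 and an L-Lipschitz function G : ℝ^M → ℝ such that G(r(X)) is a version of E[Y | r(X)]. Let g* : ℝ^d → ℝ be a measurable function such that g*(X) is a version of E[Y | X]. Then, choosing the bandwidth h = ℓ^{−1/(M+2)}, there exists a constant C > 0 independent of ℓ such that E[|g_n(r(X)) − g*(X)|²] ≤ min_{1 ≤ m ≤ M} E[|r_m(X) − g*(X)|²] + C·ℓ^{−2/(M+2)} for every ℓ ≥ 1, where the expectation is over both X and the sample (X_i,Y_i)_{i=1}^ℓ. -/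

import Mathlib

open MeasureTheory Filter

/-- A kernel `K : ℝ^M → ℝ` is *regular* with constants `b, ρ > 0` and `κ₀ < ∞` if
`b·1_{‖z‖<ρ} ≤ K(z) ≤ 1` for every `z` and
`∫_{ℝ^M} sup_{u ∈ B(z,ρ)} K(u) dz = κ₀ < ∞`. -/
structure IsRegularKernel {M : ℕ} (K : EuclideanSpace ℝ (Fin M) → ℝ)
    (b ρ κ₀ : ℝ) : Prop where
  b_pos : 0 < b
  rho_pos : 0 < ρ
  measurable : Measurable K
  nonneg : ∀ z, 0 ≤ K z
  lower : ∀ z, ‖z‖ < ρ → b ≤ K z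
  le_one : ∀ z, K z ≤ 1
  lintegral_sup : ∫⁻ z, (⨆ u ∈ Metric.ball z ρ, ENNReal.ofReal (K u))
      = ENNReal.ofReal κ₀

/-- The weight `W_{n,i}(x) = K_h(r(x) − r(X_i)) / ∑_j K_h(r(x) − r(X_j))`
(with `K_h(z) = K(z/h)` and the convention `0/0 = 0`), where the sample points are
`X (ωs j)`, `j = 1,…,ℓ`. -/
noncomputable def kernelWeight {Ω : Type*} {d M : ℕ}
    (K : EuclideanSpace ℝ (Fin M) → ℝ) (h : ℝ)
    (r : (Fin d → ℝ) → EuclideanSpace ℝ (Fin M))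
    (X : Ω → Fin d → ℝ) {ℓ : ℕ} (ωs : Fin ℓ → Ω) (x : Fin d → ℝ) (i : Fin ℓ) : ℝ :=
  K (h⁻¹ • (r x - r (X (ωs i)))) / ∑ j, K (h⁻¹ • (r x - r (X (ωs j))))

/-- The kernel-based consensual aggregation estimator
`g_n(r(x)) = ∑_{i=1}^ℓ W_{n,i}(x)·Y_i`. -/
noncomputable def aggEstimator {Ω : Type*} {d M : ℕ}
    (K : EuclideanSpace ℝ (Fin M) → ℝ) (h : ℝ)
    (r : (Fin d → ℝ) → EuclideanSpace ℝ (Fin M))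
    (X : Ω → Fin d → ℝ) (Y : Ω → ℝ) {ℓ : ℕ} (ωs : Fin ℓ → Ω) (x : Fin d → ℝ) : ℝ :=
  ∑ i, kernelWeight K h r X ωs x i * Y (ωs i)

/-!
Write `g*` for the regression function of `Y` on `X` and `G` for that of `Y` on `r(X)`. The
estimator at `r(X)` and the coordinates of `r(X)` are functions of `r(X)`, so by Pythagoras for
conditional expectations the excess risk of the estimator over any `r_m` is at most its squared
distance to `G`.

Conditionally on the design, that distance splits into a variance term, bounded by the
conditional variance of `Y` times `∑ W_i² ≤ 2 / (1 + ∑ K_i)`, and a bias term, bounded up to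
`O(1 / (1 + ∑ K_i))` by `∑ K_i L² ‖r(x) - r(X_i)‖² / (1 + ∑ K_i)`. Everything has the form
`∑ g_i / (1 + ∑ K_i)`, and leaving one point out bounds the expectation of such a ratio by
`E[g] / E[K]`.

In the rescaled variable `h⁻¹ r(X)`, with law `q`, `E[K]` is at least `b q(B(u, ρ))`. Tonelli over
balls of radius `ρ / 2` shows that `q`-averages of `1 / q(B(u, ρ))` are at most the volume of the
support in units of such balls, `O(h⁻ᴹ)`, and that the bias integral is `O(h²)`. The risk is
therefore `O(h⁻ᴹ / ℓ + h²)`, which `h = ℓ^(-1/(M+2))` balances.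
-/

open scoped ENNReal

section Weights

variable {ι : Type*} [Fintype ι]

lemma sum_sq_div_sum_le {k : ι → ℝ} (hk0 : ∀ i, 0 ≤ k i) (hk1 : ∀ i, k i ≤ 1) :
    ∑ i, (k i / ∑ j, k j) ^ 2 ≤ 2 / (1 + ∑ j, k j) := by
  have hD0 : 0 ≤ ∑ j, k j := Finset.sum_nonneg fun i _ => hk0 i
  rcases hD0.eq_or_lt with hD | hD
  · simp [← hD]
  have hmax (i : ι) : k i / ∑ j, k j ≤ 2 / (1 + ∑ j, k j) := by
    rw [div_le_div_iff₀ hD (by positivity)]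
    have hle : k i ≤ ∑ j, k j :=
      Finset.single_le_sum (fun j _ => hk0 j) (Finset.mem_univ i)
    nlinarith [hk1 i]
  calc ∑ i, (k i / ∑ j, k j) ^ 2
      ≤ ∑ i, 2 / (1 + ∑ j, k j) * (k i / ∑ j, k j) := by
        gcongr with i
        rw [sq]
        exact mul_le_mul_of_nonneg_right (hmax i) (div_nonneg (hk0 i) hD0)
    _ = 2 / (1 + ∑ j, k j) := by
        rw [← Finset.mul_sum, ← Finset.sum_div, div_self hD.ne', mul_one]

lemma centerMass_eq_sum_div (k y : ι → ℝ) :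
    Finset.univ.centerMass k y = ∑ i, k i / (∑ j, k j) * y i := by
  simp only [Finset.centerMass, smul_eq_mul, Finset.mul_sum, div_eq_inv_mul, mul_assoc]

lemma abs_centerMass_le {k y : ι → ℝ} {B : ℝ} (hk : ∀ i, 0 ≤ k i) (hB : 0 ≤ B)
    (hy : ∀ i, |y i| ≤ B) : |Finset.univ.centerMass k y| ≤ B := by
  have hD0 : 0 ≤ ∑ i, k i := Finset.sum_nonneg fun i _ => hk i
  rcases hD0.eq_or_lt with hD | hD
  · simpa [Finset.centerMass, ← hD] using hB
  · simpa only [mem_closedBall_zero_iff, Real.norm_eq_abs] using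
      (convex_closedBall (0 : ℝ) B).centerMass_mem (fun i _ => hk i) hD
        (z := y) (fun i _ => mem_closedBall_zero_iff.2 (hy i))

/- If the weights do not vanish, Jensen bounds the left side by `S / D`, where `D = ∑ k i` and
`S = ∑ k i (f i - y)²`; then `S / D ≤ (4 B² + S) / (1 + D)` because `S ≤ 4 B² D`. -/
lemma sq_centerMass_sub_le {k f : ι → ℝ} {y B : ℝ} (hk : ∀ i, 0 ≤ k i)
    (hf : ∀ i, |f i| ≤ B) (hy : |y| ≤ B) :
    (Finset.univ.centerMass k f - y) ^ 2 ≤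
      (4 * B ^ 2 + ∑ i, k i * (f i - y) ^ 2) / (1 + ∑ i, k i) := by
  have hS : 0 ≤ ∑ i, k i * (f i - y) ^ 2 :=
    Finset.sum_nonneg fun i _ => mul_nonneg (hk i) (sq_nonneg _)
  have hD0 : 0 ≤ ∑ i, k i := Finset.sum_nonneg fun i _ => hk i
  rcases hD0.eq_or_lt with hD | hD
  · simp only [Finset.centerMass, ← hD, inv_zero, zero_smul, zero_sub, neg_sq, add_zero, div_one]
    nlinarith [sq_le_sq' (abs_le.1 hy).1 (abs_le.1 hy).2]
  have hSD : ∑ i, k i * (f i - y) ^ 2 ≤ 4 * B ^ 2 * ∑ i, k i := by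
    rw [Finset.mul_sum]
    refine Finset.sum_le_sum fun i _ => ?_
    have hfy : |f i - y| ≤ 2 * B := (abs_sub _ _).trans (by linarith [hf i])
    nlinarith [hk i, sq_le_sq' (abs_le.1 hfy).1 (abs_le.1 hfy).2]
  have hconv : ConvexOn ℝ Set.univ fun x : ℝ => (x - y) ^ 2 := by
    simpa [Function.comp_def, sub_eq_add_neg] using
      (Even.convexOn_pow (𝕜 := ℝ) (n := 2) even_two).translate_left (-y)
  calc (Finset.univ.centerMass k f - y) ^ 2
      ≤ Finset.univ.centerMass k ((fun x => (x - y) ^ 2) ∘ f) :=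
        hconv.map_centerMass_le (fun i _ => hk i) hD fun i _ => Set.mem_univ _
    _ = (∑ i, k i * (f i - y) ^ 2) / ∑ i, k i := by
        simp only [Finset.centerMass, smul_eq_mul, Function.comp_apply, inv_mul_eq_div]
    _ ≤ _ := by
        rw [div_le_div_iff₀ hD (by positivity)]
        linarith

lemma sq_centerMass_sub_le_noise_add_bias {k z f : ι → ℝ} {y B : ℝ} (hk : ∀ i, 0 ≤ k i)
    (hf : ∀ i, |f i| ≤ B) (hy : |y| ≤ B) :
    (Finset.univ.centerMass k z - y) ^ 2 ≤
      2 * Finset.univ.centerMass k (z - f) ^ 2 +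
        (8 * B ^ 2 + ∑ i, 2 * (k i * (f i - y) ^ 2)) / (1 + ∑ i, k i) := by
  have hdecomp : Finset.univ.centerMass k z =
      Finset.univ.centerMass k (z - f) + Finset.univ.centerMass k f := by
    simp only [centerMass_eq_sum_div, ← Finset.sum_add_distrib, ← mul_add, Pi.sub_apply,
      sub_add_cancel]
  calc (Finset.univ.centerMass k z - y) ^ 2
      ≤ 2 * (Finset.univ.centerMass k (z - f) ^ 2 + (Finset.univ.centerMass k f - y) ^ 2) := by
        rw [hdecomp, add_sub_assoc]
        exact add_sq_le
    _ ≤ 2 * (Finset.univ.centerMass k (z - f) ^ 2 +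
          (4 * B ^ 2 + ∑ i, k i * (f i - y) ^ 2) / (1 + ∑ i, k i)) := by
        gcongr
        exact sq_centerMass_sub_le hk hf hy
    _ = _ := by
        rw [← Finset.mul_sum]
        ring

lemma ofReal_div_add_ofReal_div [Nonempty ι] {k f : ι → ℝ} (hk : ∀ i, 0 ≤ k i)
    (hf : ∀ i, 0 ≤ f i) {a b : ℝ} (ha : 0 ≤ a) (hb : 0 ≤ b) :
    ENNReal.ofReal (a / (1 + ∑ i, k i)) + ENNReal.ofReal ((b + ∑ i, f i) / (1 + ∑ i, k i)) =
      (∑ i, ENNReal.ofReal ((a + b) / Fintype.card ι + f i)) /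
        (1 + ∑ i, ENNReal.ofReal (k i)) := by
  have hD : 0 ≤ ∑ i, k i := Finset.sum_nonneg fun i _ => hk i
  have hF : 0 ≤ ∑ i, f i := Finset.sum_nonneg fun i _ => hf i
  have hsum : ∑ i, ((a + b) / Fintype.card ι + f i) = a + (b + ∑ i, f i) := by
    rw [Finset.sum_add_distrib, Finset.sum_const, Finset.card_univ, nsmul_eq_mul,
      mul_div_cancel₀ _ (Nat.cast_ne_zero.2 Fintype.card_ne_zero), add_assoc]
  rw [← ENNReal.ofReal_add (by positivity) (by positivity), ← add_div, ← hsum,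
    ENNReal.ofReal_div_of_pos (by positivity), ENNReal.ofReal_add zero_le_one hD,
    ENNReal.ofReal_one, ENNReal.ofReal_sum_of_nonneg fun i _ => hk i,
    ENNReal.ofReal_sum_of_nonneg fun i _ => add_nonneg (by positivity) (hf i)]

end Weights

section Resampling

variable {ι : Type*} [Fintype ι]

lemma measurePreserving_update_pi [DecidableEq ι] {α : ι → Type*} [∀ j, MeasurableSpace (α j)]
    (μ : ∀ j, Measure (α j)) [∀ j, IsProbabilityMeasure (μ j)] (i : ι) :
    MeasurePreserving (fun p : (∀ j, α j) × α i => Function.update p.1 i p.2)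
      ((Measure.pi μ).prod (μ i)) (Measure.pi μ) := by
  refine ⟨measurable_update', (Measure.pi_eq fun s hs => ?_).symm⟩
  have hpre : (fun p : (∀ j, α j) × α i => Function.update p.1 i p.2) ⁻¹' Set.univ.pi s =
      Set.univ.pi (Function.update s i Set.univ) ×ˢ s i := by
    ext p
    simp only [Set.mem_preimage, Set.mem_pi, Set.mem_univ, true_imp_iff, Set.mem_prod]
    refine ⟨fun h => ⟨fun j => ?_, by simpa using h i⟩, fun h j => ?_⟩
    · rcases eq_or_ne j i with rfl | hj
      · simp
      · simpa [hj] using h j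
    · rcases eq_or_ne j i with rfl | hj
      · simpa using h.2
      · simpa [hj] using h.1 j
  rw [Measure.map_apply measurable_update' (MeasurableSet.univ_pi hs), hpre, Measure.prod_prod,
    Measure.pi_pi, ← Finset.prod_erase_mul _ _ (Finset.mem_univ i),
    ← Finset.prod_erase_mul (a := i) Finset.univ _ (Finset.mem_univ i)]
  simp only [Function.update_self, measure_univ, mul_one]
  congr 1
  refine Finset.prod_congr rfl fun j hj => ?_
  rw [Function.update_of_ne (Finset.ne_of_mem_erase hj)]

lemma lintegral_pi_eq_lintegral_update [DecidableEq ι] {α : ι → Type*}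
    [∀ j, MeasurableSpace (α j)] (μ : ∀ j, Measure (α j)) [∀ j, IsProbabilityMeasure (μ j)]
    (i : ι) {f : (∀ j, α j) → ℝ≥0∞} (hf : Measurable f) :
    ∫⁻ ω, f ω ∂Measure.pi μ =
      ∫⁻ ω, ∫⁻ a, f (Function.update ω i a) ∂μ i ∂Measure.pi μ := by
  rw [← (measurePreserving_update_pi μ i).lintegral_comp hf,
    lintegral_prod (fun p => f (Function.update p.1 i p.2))
      (hf.comp measurable_update').aemeasurable]

variable {Ω : Type*} [MeasurableSpace Ω] {μ : Measure Ω} [IsProbabilityMeasure μ]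

lemma lintegral_eval_mul_of_update_eq [DecidableEq ι] (i : ι) {f : Ω → ℝ≥0∞}
    (hf : Measurable f) {T : (ι → Ω) → ℝ≥0∞} (hT : Measurable T)
    (hTi : ∀ ω a, T (Function.update ω i a) = T ω) :
    ∫⁻ ω, f (ω i) * T ω ∂Measure.pi (fun _ => μ) =
      (∫⁻ a, f a ∂μ) * ∫⁻ ω, T ω ∂Measure.pi (fun _ => μ) := by
  rw [lintegral_pi_eq_lintegral_update _ i (by fun_prop)]
  simp only [Function.update_self, hTi, lintegral_mul_const _ hf]
  rw [lintegral_const_mul _ hT]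

/- Write `T i` for `(1 + ∑ j ≠ i, k (ω j))⁻¹`, which is independent of `ω i`. The left side is at
most `(∫ g) ∑ i, E[T i]`, while `(∫ k) ∑ i, E[T i] = E[∑ i, k (ω i) T i] ≤ 1` because
`1 + ∑ j ≠ i, k (ω j)` dominates `∑ j, k (ω j)`. -/
lemma lintegral_sum_div_one_add_sum_le {g k : Ω → ℝ≥0∞} (hg : Measurable g)
    (hk : Measurable k) (hk1 : ∀ a, k a ≤ 1) :
    ∫⁻ ω : ι → Ω, (∑ i, g (ω i)) / (1 + ∑ j, k (ω j)) ∂Measure.pi (fun _ => μ) ≤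
      (∫⁻ a, g a ∂μ) / ∫⁻ a, k a ∂μ := by
  classical
  set P : Measure (ι → Ω) := Measure.pi fun _ => μ
  let T (i : ι) (ω : ι → Ω) : ℝ≥0∞ := (1 + ∑ j ∈ Finset.univ.erase i, k (ω j))⁻¹
  have hT (i : ι) : Measurable (T i) := by fun_prop
  have hTupdate (i : ι) (ω : ι → Ω) (a : Ω) : T i (Function.update ω i a) = T i ω := by
    simp only [T]
    congr 2
    exact Finset.sum_congr rfl fun j hj => by
      rw [Function.update_of_ne (Finset.ne_of_mem_erase hj)]
  have hfactor {f : Ω → ℝ≥0∞} (hf : Measurable f) :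
      ∫⁻ ω, ∑ i, f (ω i) * T i ω ∂P = (∫⁻ a, f a ∂μ) * ∑ i, ∫⁻ ω, T i ω ∂P := by
    rw [lintegral_finsetSum _ fun i _ => by fun_prop, Finset.mul_sum]
    exact Finset.sum_congr rfl fun i _ =>
      lintegral_eval_mul_of_update_eq i hf (hT i) (hTupdate i)
  have hS : ∑ i, ∫⁻ ω, T i ω ∂P ≤ (∫⁻ a, k a ∂μ)⁻¹ := by
    rw [ENNReal.le_inv_iff_mul_le, mul_comm, ← hfactor hk]
    refine (lintegral_mono fun ω => ?_).trans_eq (by rw [lintegral_one, measure_univ])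
    calc ∑ i, k (ω i) * T i ω ≤ ∑ i, k (ω i) / ∑ j, k (ω j) := by
          gcongr with i
          rw [div_eq_mul_inv, ← Finset.add_sum_erase _ _ (Finset.mem_univ i)]
          exact mul_le_mul_right (ENNReal.inv_le_inv.2 (add_le_add_left (hk1 _) _)) _
      _ = (∑ i, k (ω i)) / ∑ j, k (ω j) := by simp only [div_eq_mul_inv, Finset.sum_mul]
      _ ≤ 1 := ENNReal.div_self_le_one
  calc ∫⁻ ω : ι → Ω, (∑ i, g (ω i)) / (1 + ∑ j, k (ω j)) ∂P
      ≤ ∫⁻ ω, ∑ i, g (ω i) * T i ω ∂P := by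
        gcongr with ω
        rw [div_eq_mul_inv, Finset.sum_mul]
        gcongr with i
        exact ENNReal.inv_le_inv.2 <| add_le_add_right
          (Finset.sum_le_sum_of_subset (Finset.erase_subset _ _)) _
    _ ≤ (∫⁻ a, g a ∂μ) / ∫⁻ a, k a ∂μ := by
        rw [hfactor hg, div_eq_mul_inv]
        gcongr

end Resampling

section CondExp

variable {Ω : Type*} {m m₀ : MeasurableSpace Ω} {μ : Measure Ω}

variable {E : Type*} [mE : MeasurableSpace E] {U : Ω → E} {Y : Ω → ℝ} {φ : E → ℝ}

open ProbabilityTheory in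
lemma condExp_sub_comp_sq_eq_condVar (hφY : φ ∘ U =ᵐ[μ] μ[Y | mE.comap U]) :
    μ[fun ω => (Y - φ ∘ U) ω ^ 2 | mE.comap U] =ᵐ[μ] Var[Y; μ | mE.comap U] :=
  condExp_congr_ae <| hφY.mono fun ω hω => by simp only [Pi.sub_apply, Pi.pow_apply, hω]

variable [IsFiniteMeasure μ]

lemma condExp_sub_comp_eq_zero (hU : Measurable U) (hY : Integrable Y μ)
    (hφ : Measurable φ) (hφY : φ ∘ U =ᵐ[μ] μ[Y | mE.comap U]) :
    μ[Y - φ ∘ U | mE.comap U] =ᵐ[μ] 0 := by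
  have hφint : Integrable (φ ∘ U) μ := integrable_condExp.congr hφY.symm
  filter_upwards [condExp_sub hY hφint (mE.comap U), hφY] with ω hsub hω
  rw [hsub, Pi.sub_apply, ← hω, condExp_of_stronglyMeasurable hU.comap_le
    (hφ.comp (comap_measurable U)).stronglyMeasurable hφint, sub_self, Pi.zero_apply]

lemma integral_mul_condExp (hm : m ≤ m₀) {ψ f : Ω → ℝ} (hψ : StronglyMeasurable[m] ψ)
    (hψf : Integrable (ψ * f) μ) (hf : Integrable f μ) :
    ∫ ω, ψ ω * (μ[f | m]) ω ∂μ = ∫ ω, ψ ω * f ω ∂μ := by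
  refine Eq.trans ?_ (integral_condExp hm)
  exact (integral_congr_ae <| condExp_mul_of_stronglyMeasurable_left hψ hψf hf).symm

lemma integral_sub_sq_eq_add_condExp (hm : m ≤ m₀) {W Z : Ω → ℝ} (hWm : StronglyMeasurable[m] W)
    (hW : MemLp W 2 μ) (hZ : MemLp Z 2 μ) :
    ∫ ω, (W ω - Z ω) ^ 2 ∂μ =
      ∫ ω, (W ω - (μ[Z | m]) ω) ^ 2 ∂μ + ∫ ω, ((μ[Z | m]) ω - Z ω) ^ 2 ∂μ := by
  set C := μ[Z | m]
  have hC : MemLp C 2 μ := hZ.condExp one_le_two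
  have hWC : MemLp (fun ω => W ω - C ω) 2 μ := hW.sub hC
  have hCZ : MemLp (fun ω => C ω - Z ω) 2 μ := hC.sub hZ
  have hcross : ∫ ω, (W ω - C ω) * (C ω - Z ω) ∂μ = 0 := by
    have horth := integral_mul_condExp hm (hWm.sub stronglyMeasurable_condExp)
      (hWC.integrable_mul hZ) (hZ.integrable one_le_two)
    simp only [mul_sub]
    rw [integral_sub, sub_eq_zero]
    · exact horth
    · exact hWC.integrable_mul hC
    · exact hWC.integrable_mul hZ
  have hexpand (ω : Ω) : (W ω - Z ω) ^ 2 =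
      (W ω - C ω) ^ 2 + (C ω - Z ω) ^ 2 + 2 * ((W ω - C ω) * (C ω - Z ω)) := by ring
  simp only [hexpand]
  rw [integral_add, integral_add hWC.integrable_sq hCZ.integrable_sq, integral_const_mul, hcross,
    mul_zero, add_zero]
  · exact hWC.integrable_sq.add hCZ.integrable_sq
  · exact (hWC.integrable_mul hCZ).const_mul 2

lemma integral_sub_sq_condExp_le {m₁ m₂ : MeasurableSpace Ω} (h₁₂ : m₁ ≤ m₂) (h₂ : m₂ ≤ m₀)
    {W V Y : Ω → ℝ} (hWm : StronglyMeasurable[m₁] W) (hVm : StronglyMeasurable[m₁] V)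
    (hW : MemLp W 2 μ) (hV : MemLp V 2 μ) (hY : MemLp Y 2 μ) :
    ∫ ω, (W ω - (μ[Y | m₂]) ω) ^ 2 ∂μ ≤
      ∫ ω, (V ω - (μ[Y | m₂]) ω) ^ 2 ∂μ + ∫ ω, (W ω - (μ[Y | m₁]) ω) ^ 2 ∂μ := by
  have hZ : MemLp (μ[Y | m₂]) 2 μ := hY.condExp one_le_two
  have htower : μ[μ[Y | m₂] | m₁] =ᵐ[μ] μ[Y | m₁] := condExp_condExp_of_le h₁₂ h₂
  have hWproj : ∫ ω, (W ω - (μ[μ[Y | m₂] | m₁]) ω) ^ 2 ∂μ = ∫ ω, (W ω - (μ[Y | m₁]) ω) ^ 2 ∂μ :=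
    integral_congr_ae <| htower.mono fun ω hω => by simp only [hω]
  have hVproj : 0 ≤ ∫ ω, (V ω - (μ[μ[Y | m₂] | m₁]) ω) ^ 2 ∂μ :=
    integral_nonneg fun ω => sq_nonneg _
  linarith [integral_sub_sq_eq_add_condExp (h₁₂.trans h₂) hWm hW hZ,
    integral_sub_sq_eq_add_condExp (h₁₂.trans h₂) hVm hV hZ]

end CondExp

section Variance

variable {ι : Type*} [Fintype ι]

lemma integral_pi_eq_integral_update [DecidableEq ι] {α : ι → Type*}
    [∀ j, MeasurableSpace (α j)] (μ : ∀ j, Measure (α j)) [∀ j, IsProbabilityMeasure (μ j)]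
    (i : ι) {f : (∀ j, α j) → ℝ} (hf : Integrable f (Measure.pi μ)) :
    ∫ ω, f ω ∂Measure.pi μ = ∫ ω, ∫ a, f (Function.update ω i a) ∂μ i ∂Measure.pi μ := by
  have hmp := measurePreserving_update_pi μ i
  have hfm : AEStronglyMeasurable f (Measure.map _ _) := hmp.map_eq ▸ hf.aestronglyMeasurable
  rw [← integral_prod (fun p => f (Function.update p.1 i p.2))
      (hmp.integrable_comp_of_integrable hf),
    ← integral_map hmp.measurable.aemeasurable hfm, hmp.map_eq]

variable {Ω E : Type*} [MeasurableSpace Ω] [mE : MeasurableSpace E] {μ : Measure Ω}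
  [IsProbabilityMeasure μ] {U : Ω → E}

lemma integral_mul_eval_eq_integral_condExp_update [DecidableEq ι] (hU : Measurable U) (i : ι)
    {Ψ : (ι → E) → ℝ} (hΨ : Measurable Ψ) {c : ℝ} (hΨc : ∀ u, |Ψ u| ≤ c)
    {f : Ω → ℝ} (hf : Integrable f μ) {g : (ι → Ω) → ℝ}
    (hg : ∀ ω a, g (Function.update ω i a) = g ω)
    (hfg : Integrable (fun ω => f (ω i) * g ω) (Measure.pi fun _ => μ)) :
    ∫ ω, Ψ (U ∘ ω) * (f (ω i) * g ω) ∂Measure.pi (fun _ => μ) =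
      ∫ ω, g ω * ∫ a, Ψ (Function.update (U ∘ ω) i (U a)) * (μ[f | mE.comap U]) a ∂μ
        ∂Measure.pi fun _ => μ := by
  rw [integral_pi_eq_integral_update (fun _ => μ) i]
  · refine integral_congr_ae <| .of_forall fun ω => ?_
    have hψ : StronglyMeasurable[mE.comap U] fun a => Ψ (Function.update (U ∘ ω) i (U a)) :=
      ((hΨ.comp (measurable_update _)).comp (comap_measurable U)).stronglyMeasurable
    have hψf : Integrable (fun a => Ψ (Function.update (U ∘ ω) i (U a)) * f a) μ :=
      hf.bdd_mul (hψ.mono hU.comap_le).aestronglyMeasurable (.of_forall fun a => hΨc _)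
    simp only [Function.comp_update, Function.update_self, hg]
    rw [integral_mul_condExp hU.comap_le hψ hψf hf, ← integral_const_mul]
    exact integral_congr_ae <| .of_forall fun a => by ring
  · exact hfg.bdd_mul (hΨ.comp (by fun_prop)).aestronglyMeasurable (.of_forall fun ω => hΨc _)

lemma memLp_eval {e : Ω → ℝ} {p : ℝ≥0∞} (he : MemLp e p μ) (i : ι) :
    MemLp (fun ω : ι → Ω => e (ω i)) p (Measure.pi fun _ => μ) :=
  he.comp_measurePreserving (measurePreserving_eval (fun _ => μ) i)

variable {e : Ω → ℝ} {Ψ : (ι → E) → ℝ} {c : ℝ}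

lemma integral_mul_eval_mul_eval_eq_zero (hU : Measurable U) (he : MemLp e 2 μ)
    (hmean : μ[e | mE.comap U] =ᵐ[μ] 0) (hΨ : Measurable Ψ) (hΨc : ∀ u, |Ψ u| ≤ c)
    {i j : ι} (hij : i ≠ j) :
    ∫ ω, Ψ (U ∘ ω) * (e (ω i) * e (ω j)) ∂Measure.pi (fun _ => μ) = 0 := by
  classical
  rw [integral_mul_eval_eq_integral_condExp_update hU i hΨ hΨc (he.integrable one_le_two)
    (g := fun ω => e (ω j)) (fun ω a => by rw [Function.update_of_ne hij.symm])
    ((memLp_eval he i).integrable_mul (memLp_eval he j))]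
  have hinner (ω : ι → Ω) :
      ∫ a, Ψ (Function.update (U ∘ ω) i (U a)) * (μ[e | mE.comap U]) a ∂μ = 0 := by
    refine integral_eq_zero_of_ae (hmean.mono fun a ha => ?_)
    simp only [ha, Pi.zero_apply, mul_zero]
  simp only [hinner, mul_zero, integral_zero]

lemma integral_mul_sq_eval_le (hU : Measurable U) (he : MemLp e 2 μ) {v : ℝ}
    (hvar : μ[fun ω => e ω ^ 2 | mE.comap U] ≤ᵐ[μ] fun _ => v)
    (hΨ : Measurable Ψ) (hΨ0 : ∀ u, 0 ≤ Ψ u) (hΨc : ∀ u, Ψ u ≤ c) (i : ι) :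
    ∫ ω, Ψ (U ∘ ω) * e (ω i) ^ 2 ∂Measure.pi (fun _ => μ) ≤
      v * ∫ ω, Ψ (U ∘ ω) ∂Measure.pi fun _ : ι => μ := by
  classical
  have hΨabs (u : ι → E) : |Ψ u| ≤ c := (abs_of_nonneg (hΨ0 u)).trans_le (hΨc u)
  have hΨint : Integrable (fun ω : ι → Ω => Ψ (U ∘ ω)) (Measure.pi fun _ => μ) :=
    .of_bound (hΨ.comp (by fun_prop)).aestronglyMeasurable c (.of_forall fun ω => hΨabs _)
  have hsq : Integrable (fun ω : ι → Ω => e (ω i) ^ 2) (Measure.pi fun _ => μ) :=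
    (memLp_eval he i).integrable_sq
  have hΨsq : Integrable (fun ω : ι → Ω => Ψ (U ∘ ω) * e (ω i) ^ 2) (Measure.pi fun _ => μ) :=
    hsq.bdd_mul hΨint.aestronglyMeasurable (.of_forall fun ω => hΨabs _)
  have hvsq : Integrable (fun ω : ι → Ω => v - e (ω i) ^ 2) (Measure.pi fun _ => μ) :=
    (integrable_const v).sub hsq
  have hresample := integral_mul_eval_eq_integral_condExp_update hU i hΨ hΨabs
    ((integrable_const v).sub he.integrable_sq) (g := fun _ => 1) (fun _ _ => rfl)
    (by simpa only [Pi.sub_apply, mul_one] using hvsq)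
  have hcond : 0 ≤ᵐ[μ] μ[(fun _ => v) - fun ω => e ω ^ 2 | mE.comap U] := by
    filter_upwards [condExp_sub (integrable_const v) he.integrable_sq (mE.comap U), hvar]
      with a hsub ha
    simpa only [hsub, Pi.sub_apply, condExp_const hU.comap_le, Pi.zero_apply, sub_nonneg] using ha
  have hnonneg : 0 ≤ ∫ ω, Ψ (U ∘ ω) * (v - e (ω i) ^ 2) ∂Measure.pi fun _ : ι => μ := by
    simp only [Pi.sub_apply, mul_one, one_mul] at hresample
    rw [hresample]
    exact integral_nonneg fun ω => integral_nonneg_of_ae <| hcond.mono fun a ha =>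
      mul_nonneg (hΨ0 _) ha
  simp only [mul_sub] at hnonneg
  rw [integral_sub (hΨint.mul_const v) hΨsq, integral_mul_const] at hnonneg
  linarith

lemma integral_sum_mul_eval_sq_le (hU : Measurable U) (he : MemLp e 2 μ)
    (hmean : μ[e | mE.comap U] =ᵐ[μ] 0) {v : ℝ}
    (hvar : μ[fun ω => e ω ^ 2 | mE.comap U] ≤ᵐ[μ] fun _ => v)
    {w : ι → (ι → E) → ℝ} (hw : ∀ i, Measurable (w i)) (hwc : ∀ i u, |w i u| ≤ c) :
    ∫ ω, (∑ i, w i (U ∘ ω) * e (ω i)) ^ 2 ∂Measure.pi (fun _ => μ) ≤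
      v * ∫ ω, ∑ i, w i (U ∘ ω) ^ 2 ∂Measure.pi fun _ => μ := by
  have hwwc (i j : ι) (u : ι → E) : |w i u * w j u| ≤ c * c := by
    rw [abs_mul]
    exact mul_le_mul (hwc i u) (hwc j u) (abs_nonneg _) ((abs_nonneg _).trans (hwc i u))
  have hUpi : Measurable fun ω : ι → Ω => U ∘ ω := by fun_prop
  have hww (i j : ι) : Measurable fun u => w i u * w j u := (hw i).mul (hw j)
  have hint (i j : ι) : Integrable
      (fun ω => w i (U ∘ ω) * w j (U ∘ ω) * (e (ω i) * e (ω j))) (Measure.pi fun _ => μ) :=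
    ((memLp_eval he i).integrable_mul (memLp_eval he j)).bdd_mul
      ((hww i j).comp hUpi).aestronglyMeasurable (.of_forall fun ω => hwwc i j _)
  have hw2int (i : ι) : Integrable (fun ω => w i (U ∘ ω) ^ 2) (Measure.pi fun _ => μ) :=
    .of_bound (((hw i).pow_const 2).comp hUpi).aestronglyMeasurable (c * c)
      (.of_forall fun ω => by simpa only [sq, Real.norm_eq_abs] using hwwc i i _)
  calc ∫ ω, (∑ i, w i (U ∘ ω) * e (ω i)) ^ 2 ∂Measure.pi (fun _ => μ)
      = ∫ ω, ∑ i, ∑ j, w i (U ∘ ω) * w j (U ∘ ω) * (e (ω i) * e (ω j))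
          ∂Measure.pi fun _ => μ := by
        simp only [sq, Finset.sum_mul_sum, mul_mul_mul_comm]
    _ = ∑ i, ∑ j, ∫ ω, w i (U ∘ ω) * w j (U ∘ ω) * (e (ω i) * e (ω j))
          ∂Measure.pi fun _ => μ := by
        rw [integral_finsetSum _ fun i _ => integrable_finsetSum _ fun j _ => hint i j]
        exact Finset.sum_congr rfl fun i _ => integral_finsetSum _ fun j _ => hint i j
    _ = ∑ i, ∫ ω, w i (U ∘ ω) ^ 2 * e (ω i) ^ 2 ∂Measure.pi fun _ => μ := by
        refine Finset.sum_congr rfl fun i _ => ?_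
        rw [Finset.sum_eq_single i (fun j _ hji =>
          integral_mul_eval_mul_eval_eq_zero hU he hmean (hww i j) (hwwc i j) hji.symm) (by simp)]
        simp only [sq]
    _ ≤ ∑ i, v * ∫ ω, w i (U ∘ ω) ^ 2 ∂Measure.pi fun _ => μ :=
        Finset.sum_le_sum fun i _ => integral_mul_sq_eval_le hU he hvar ((hw i).pow_const 2)
          (fun u => sq_nonneg _) (fun u => (sq_abs _).symm.trans_le
            (pow_le_pow_left₀ (abs_nonneg _) (hwc i u) 2)) i
    _ = v * ∫ ω, ∑ i, w i (U ∘ ω) ^ 2 ∂Measure.pi fun _ => μ := by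
        rw [integral_finsetSum _ fun i _ => hw2int i, Finset.mul_sum]

end Variance

section PointwiseRisk

variable {ι : Type*} [Fintype ι] {Ω E : Type*} [MeasurableSpace Ω] [mE : MeasurableSpace E]
  {μ : Measure Ω} [IsProbabilityMeasure μ] {U : Ω → E} {k : E → ℝ}

lemma memLp_centerMass (hU : Measurable U) (hk : Measurable k) (hk0 : ∀ u, 0 ≤ k u) {e : Ω → ℝ}
    (he : MemLp e 2 μ) :
    MemLp (fun ω : ι → Ω => Finset.univ.centerMass (fun i => k (U (ω i))) fun i => e (ω i)) 2
      (Measure.pi fun _ => μ) := by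
  have hsum : MemLp (fun ω : ι → Ω => ∑ i, |e (ω i)|) 2 (Measure.pi fun _ => μ) :=
    memLp_finsetSum _ fun i _ => (memLp_eval he i).abs
  refine hsum.mono ?_ (.of_forall fun ω => ?_)
  · have hei (i : ι) := (memLp_eval he i).aestronglyMeasurable.aemeasurable
    simp only [centerMass_eq_sum_div]
    exact (Finset.aemeasurable_fun_sum _ fun i _ =>
      (Measurable.aemeasurable (by fun_prop)).mul (hei i)).aestronglyMeasurable
  · have hle (i : ι) : |e (ω i)| ≤ ∑ i, |e (ω i)| :=
      Finset.single_le_sum (f := fun i => |e (ω i)|) (fun j _ => abs_nonneg _) (Finset.mem_univ i)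
    exact (abs_centerMass_le (fun i => hk0 _) (Finset.sum_nonneg fun i _ => abs_nonneg _) hle).trans
      (le_abs_self _)

lemma integrable_inv_one_add_sum (hU : Measurable U) (hk : Measurable k) (hk0 : ∀ u, 0 ≤ k u) :
    Integrable (fun ω : ι → Ω => (1 + ∑ i, k (U (ω i)))⁻¹) (Measure.pi fun _ => μ) := by
  refine Integrable.of_bound (Measurable.aestronglyMeasurable (by fun_prop)) 1
    (.of_forall fun ω => ?_)
  have hD : 0 ≤ ∑ i, k (U (ω i)) := Finset.sum_nonneg fun i _ => hk0 _
  rw [Real.norm_of_nonneg (by positivity)]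
  exact inv_le_one_of_one_le₀ (by linarith)

lemma integral_centerMass_sq_le (hU : Measurable U) (hk : Measurable k) (hk0 : ∀ u, 0 ≤ k u)
    (hk1 : ∀ u, k u ≤ 1) {e : Ω → ℝ} (he : MemLp e 2 μ) (hmean : μ[e | mE.comap U] =ᵐ[μ] 0)
    {σ : ℝ} (hvar : μ[fun ω => e ω ^ 2 | mE.comap U] ≤ᵐ[μ] fun _ => σ ^ 2) :
    ∫ ω : ι → Ω, (Finset.univ.centerMass (fun i => k (U (ω i))) fun i => e (ω i)) ^ 2
        ∂Measure.pi (fun _ => μ) ≤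
      2 * σ ^ 2 * ∫ ω : ι → Ω, (1 + ∑ i, k (U (ω i)))⁻¹ ∂Measure.pi fun _ => μ := by
  let w (i : ι) (u : ι → E) : ℝ := k (u i) / ∑ j, k (u j)
  have hw (i : ι) : Measurable (w i) := by fun_prop
  have hwc (i : ι) (u : ι → E) : |w i u| ≤ 1 := by
    have hD : 0 ≤ ∑ j, k (u j) := Finset.sum_nonneg fun j _ => hk0 _
    rw [abs_of_nonneg (div_nonneg (hk0 _) hD)]
    exact div_le_one_of_le₀
      (Finset.single_le_sum (fun j _ => hk0 (u j)) (Finset.mem_univ i)) hD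
  calc ∫ ω : ι → Ω, (Finset.univ.centerMass (fun i => k (U (ω i))) fun i => e (ω i)) ^ 2
        ∂Measure.pi (fun _ => μ)
      = ∫ ω, (∑ i, w i (U ∘ ω) * e (ω i)) ^ 2 ∂Measure.pi fun _ => μ := by
        simp only [centerMass_eq_sum_div, w, Function.comp_apply]
    _ ≤ σ ^ 2 * ∫ ω, ∑ i, w i (U ∘ ω) ^ 2 ∂Measure.pi fun _ => μ :=
        integral_sum_mul_eval_sq_le hU he hmean hvar hw hwc
    _ ≤ σ ^ 2 * ∫ ω : ι → Ω, 2 * (1 + ∑ i, k (U (ω i)))⁻¹ ∂Measure.pi fun _ => μ := by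
        refine mul_le_mul_of_nonneg_left (integral_mono_of_nonneg (.of_forall fun ω => ?_)
          ((integrable_inv_one_add_sum hU hk hk0).const_mul 2) (.of_forall fun ω => ?_))
          (sq_nonneg σ)
        · exact Finset.sum_nonneg fun i _ => sq_nonneg _
        · exact sum_sq_div_sum_le (fun i => hk0 _) (fun i => hk1 _)
    _ = _ := by
        rw [integral_const_mul]
        ring

lemma lintegral_centerMass_sq_le (hU : Measurable U) (hk : Measurable k) (hk0 : ∀ u, 0 ≤ k u)
    (hk1 : ∀ u, k u ≤ 1) {e : Ω → ℝ} (he : MemLp e 2 μ) (hmean : μ[e | mE.comap U] =ᵐ[μ] 0)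
    {σ : ℝ} (hvar : μ[fun ω => e ω ^ 2 | mE.comap U] ≤ᵐ[μ] fun _ => σ ^ 2) :
    ∫⁻ ω : ι → Ω, ENNReal.ofReal
        (2 * (Finset.univ.centerMass (fun i => k (U (ω i))) fun i => e (ω i)) ^ 2)
        ∂Measure.pi (fun _ => μ) ≤
      ∫⁻ ω : ι → Ω, ENNReal.ofReal (4 * σ ^ 2 / (1 + ∑ i, k (U (ω i))))
        ∂Measure.pi fun _ => μ := by
  have hD (ω : ι → Ω) : 0 ≤ ∑ i, k (U (ω i)) := Finset.sum_nonneg fun i _ => hk0 _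
  have hinv := integrable_inv_one_add_sum (ι := ι) (μ := μ) hU hk hk0
  have hcm := (memLp_centerMass (ι := ι) hU hk hk0 he).integrable_sq
  simp only [div_eq_mul_inv]
  rw [← ofReal_integral_eq_lintegral_ofReal (hcm.const_mul 2)
      (.of_forall fun ω => by positivity),
    ← ofReal_integral_eq_lintegral_ofReal (hinv.const_mul (4 * σ ^ 2))
      (.of_forall fun ω => mul_nonneg (by positivity)
        (inv_nonneg.2 (add_nonneg zero_le_one (hD ω)))), integral_const_mul, integral_const_mul]
  refine ENNReal.ofReal_le_ofReal ?_
  linarith [integral_centerMass_sq_le (ι := ι) hU hk hk0 hk1 he hmean hvar]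

/- The noise `Y - φ(U)` and the approximation error `φ(U) - y` are both averages over
`1 + ∑ j, k (U (ω j))`, so a single use of `lintegral_sum_div_one_add_sum_le` handles them. -/
open ProbabilityTheory in
lemma lintegral_centerMass_sub_sq_le [Nonempty ι] (hU : Measurable U) (hk : Measurable k)
    (hk0 : ∀ u, 0 ≤ k u) (hk1 : ∀ u, k u ≤ 1) {Y : Ω → ℝ} (hY : MemLp Y 2 μ) {φ : E → ℝ}
    (hφ : Measurable φ) (hφY : φ ∘ U =ᵐ[μ] μ[Y | mE.comap U]) {σ : ℝ}
    (hvar : Var[Y; μ | mE.comap U] ≤ᵐ[μ] fun _ => σ ^ 2) {B y : ℝ}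
    (hφB : ∀ a, |φ (U a)| ≤ B) (hy : |y| ≤ B) :
    ∫⁻ ω : ι → Ω, ENNReal.ofReal
        ((Finset.univ.centerMass (fun i => k (U (ω i))) (fun i => Y (ω i)) - y) ^ 2)
        ∂Measure.pi (fun _ => μ) ≤
      (∫⁻ a, ENNReal.ofReal ((4 * σ ^ 2 + 8 * B ^ 2) / Fintype.card ι +
        2 * (k (U a) * (φ (U a) - y) ^ 2)) ∂μ) / ∫⁻ a, ENNReal.ofReal (k (U a)) ∂μ := by
  let e : Ω → ℝ := Y - φ ∘ U
  have he : MemLp e 2 μ := hY.sub ((hY.condExp one_le_two).ae_eq hφY.symm)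
  have hmean := condExp_sub_comp_eq_zero hU (hY.integrable one_le_two) hφ hφY
  have hvar' : μ[fun ω => e ω ^ 2 | mE.comap U] ≤ᵐ[μ] fun _ => σ ^ 2 :=
    (condExp_sub_comp_sq_eq_condVar hφY).trans_le hvar
  have hbias0 (a : Ω) : 0 ≤ 2 * (k (U a) * (φ (U a) - y) ^ 2) :=
    mul_nonneg two_pos.le (mul_nonneg (hk0 _) (sq_nonneg _))
  let bias (ω : ι → Ω) : ℝ :=
    (8 * B ^ 2 + ∑ i, 2 * (k (U (ω i)) * (φ (U (ω i)) - y) ^ 2)) / (1 + ∑ i, k (U (ω i)))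
  have hsplit (ω : ι → Ω) := sq_centerMass_sub_le_noise_add_bias (z := fun i => Y (ω i))
    (fun i => hk0 (U (ω i))) (fun i => hφB (ω i)) hy
  have hbias : Measurable fun ω => ENNReal.ofReal (bias ω) := by fun_prop
  calc ∫⁻ ω : ι → Ω, ENNReal.ofReal
        ((Finset.univ.centerMass (fun i => k (U (ω i))) (fun i => Y (ω i)) - y) ^ 2)
        ∂Measure.pi (fun _ => μ)
      ≤ ∫⁻ ω : ι → Ω, ENNReal.ofReal
            (2 * (Finset.univ.centerMass (fun i => k (U (ω i))) fun i => e (ω i)) ^ 2) +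
          ENNReal.ofReal (bias ω) ∂Measure.pi fun _ => μ :=
        lintegral_mono fun ω => (ENNReal.ofReal_le_ofReal (hsplit ω)).trans ENNReal.ofReal_add_le
    _ ≤ ∫⁻ ω : ι → Ω, ENNReal.ofReal (4 * σ ^ 2 / (1 + ∑ i, k (U (ω i)))) +
          ENNReal.ofReal (bias ω) ∂Measure.pi fun _ => μ := by
        rw [lintegral_add_right _ hbias, lintegral_add_right _ hbias]
        exact add_le_add (lintegral_centerMass_sq_le hU hk hk0 hk1 he hmean hvar') le_rfl
    _ = ∫⁻ ω : ι → Ω, (∑ i, ENNReal.ofReal ((4 * σ ^ 2 + 8 * B ^ 2) / Fintype.card ι +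
          2 * (k (U (ω i)) * (φ (U (ω i)) - y) ^ 2))) / (1 + ∑ i, ENNReal.ofReal (k (U (ω i))))
          ∂Measure.pi fun _ => μ :=
        lintegral_congr fun ω => ofReal_div_add_ofReal_div (fun i => hk0 (U (ω i)))
          (fun i => hbias0 (ω i)) (by positivity) (by positivity)
    _ ≤ _ := lintegral_sum_div_one_add_sum_le
          (g := fun a => ENNReal.ofReal ((4 * σ ^ 2 + 8 * B ^ 2) / Fintype.card ι +
            2 * (k (U a) * (φ (U a) - y) ^ 2)))
          (k := fun a => ENNReal.ofReal (k (U a))) (by fun_prop)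
          (by fun_prop) fun a => ENNReal.ofReal_le_one.2 (hk1 _)

end PointwiseRisk

section BallSup

/-- The supremum of `f` over the open ball of radius `s` centred at `z`, as a function of `z`. -/
noncomputable def ballSup {E : Type*} [PseudoMetricSpace E] (s : ℝ) (f : E → ℝ≥0∞) (z : E) :
    ℝ≥0∞ :=
  ⨆ u ∈ Metric.ball z s, f u

lemma le_ballSup {E : Type*} [PseudoMetricSpace E] {s : ℝ} {f : E → ℝ≥0∞} {u z : E}
    (h : dist u z < s) : f u ≤ ballSup s f z :=
  le_iSup₂ (f := fun u (_ : u ∈ Metric.ball z s) => f u) u h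

lemma measurable_ballSup {E : Type*} [PseudoMetricSpace E] [MeasurableSpace E]
    [OpensMeasurableSpace E] (s : ℝ) (f : E → ℝ≥0∞) : Measurable (ballSup s f) := by
  have hind : ballSup s f = fun z => ⨆ u, (Metric.ball u s).indicator (fun _ => f u) z := by
    ext z
    refine iSup_congr fun u => ?_
    by_cases hu : u ∈ Metric.ball z s
    · simp only [hu, iSup_pos, Set.indicator_of_mem (Metric.mem_ball_comm.1 hu)]
    · simp only [hu, iSup_false, bot_eq_zero',
        Set.indicator_of_notMem fun h => hu (Metric.mem_ball_comm.1 h)]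
  rw [hind]
  exact (lowerSemicontinuous_iSup fun u =>
    Metric.isOpen_ball.lowerSemicontinuous_indicator zero_le).measurable

lemma measurable_measure_ball {E : Type*} [PseudoMetricSpace E] [SecondCountableTopology E]
    [MeasurableSpace E] [OpensMeasurableSpace E] (q : Measure E) [SFinite q] (s : ℝ) :
    Measurable fun u => q (Metric.ball u s) := by
  have hset : MeasurableSet {p : E × E | dist p.2 p.1 < s} :=
    measurableSet_lt (by fun_prop) measurable_const
  exact measurable_measure_prodMk_left hset

variable {E : Type*} [NormedAddCommGroup E] [ProperSpace E] [MeasurableSpace E] [BorelSpace E]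

/- Averaging over a ball of radius `s` around `u` moves the centre `u` to a nearby point `z`, where
`ball z s ⊆ ball u (2 s)`; after exchanging the integrals the mass `q (ball z s)` cancels. -/
lemma lintegral_div_measure_ball_le (ν : Measure E) [ν.IsAddHaarMeasure] (q : Measure E)
    [SFinite q] {s : ℝ} (hs : 0 < s) {f : E → ℝ≥0∞} (hf : Measurable f) :
    ∫⁻ u, f u / q (Metric.ball u (2 * s)) ∂q ≤
      (∫⁻ z, ballSup s f z ∂ν) / ν (Metric.ball 0 s) := by
  have hmeas : Measurable fun u => f u / q (Metric.ball u (2 * s)) :=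
    hf.div (measurable_measure_ball q _)
  let F (u z : E) : ℝ≥0∞ :=
    (Metric.ball u s).indicator (fun _ => f u / q (Metric.ball u (2 * s))) z
  have hF : Measurable (Function.uncurry F) := by
    have hnear : MeasurableSet {p : E × E | dist p.2 p.1 < s} :=
      measurableSet_lt (by fun_prop) measurable_const
    exact (hmeas.comp measurable_fst).indicator hnear
  have hFle (u z : E) :
      F u z ≤ (Metric.ball z s).indicator (fun _ => ballSup s f z / q (Metric.ball z s)) u := by
    by_cases hu : u ∈ Metric.ball z s
    · have hsub : Metric.ball z s ⊆ Metric.ball u (2 * s) :=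
        Metric.ball_subset_ball' (by linarith [Metric.mem_ball'.1 hu])
      simp only [F, Set.indicator_of_mem hu, Set.indicator_of_mem (Metric.mem_ball_comm.1 hu)]
      exact ENNReal.div_le_div (le_ballSup hu) (measure_mono hsub)
    · simp only [F, Set.indicator_of_notMem fun h => hu (Metric.mem_ball_comm.1 h), zero_le]
  rw [ENNReal.le_div_iff_mul_le (.inl (Metric.measure_ball_pos ν 0 hs).ne')
    (.inl measure_ball_lt_top.ne)]
  calc (∫⁻ u, f u / q (Metric.ball u (2 * s)) ∂q) * ν (Metric.ball 0 s)
      = ∫⁻ u, ∫⁻ z, F u z ∂ν ∂q := by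
        simp only [F, lintegral_indicator_const Metric.isOpen_ball.measurableSet,
          Measure.addHaar_ball_center ν, lintegral_mul_const _ hmeas]
    _ = ∫⁻ z, ∫⁻ u, F u z ∂q ∂ν := lintegral_lintegral_swap hF.aemeasurable
    _ ≤ ∫⁻ z, ballSup s f z / q (Metric.ball z s) * q (Metric.ball z s) ∂ν := by
        gcongr with z
        exact (lintegral_mono fun u => hFle u z).trans_eq
          (lintegral_indicator_const Metric.isOpen_ball.measurableSet _)
    _ ≤ ∫⁻ z, ballSup s f z ∂ν := by
        gcongr with z
        rw [mul_comm]
        exact ENNReal.mul_div_le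

lemma lintegral_inv_measure_ball_le (ν : Measure E) [ν.IsAddHaarMeasure] (q : Measure E)
    [SFinite q] {s T : ℝ} (hs : 0 < s) (hT : ∀ᵐ u ∂q, ‖u‖ ≤ T) :
    ∫⁻ u, (q (Metric.ball u (2 * s)))⁻¹ ∂q ≤
      ν (Metric.closedBall 0 (T + s)) / ν (Metric.ball 0 s) := by
  let f : E → ℝ≥0∞ := (Metric.closedBall 0 T).indicator 1
  have hsup (z : E) : ballSup s f z ≤ (Metric.closedBall (0 : E) (T + s)).indicator 1 z := by
    refine iSup₂_le fun u hu => ?_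
    by_cases huT : u ∈ Metric.closedBall 0 T
    · have hz : z ∈ Metric.closedBall (0 : E) (T + s) := Metric.mem_closedBall.2 <|
        (dist_triangle_left z 0 u).trans (by
          linarith [Metric.mem_ball.1 hu, Metric.mem_closedBall.1 huT])
      simp only [f, Set.indicator_of_mem huT, Set.indicator_of_mem hz, Pi.one_apply, le_refl]
    · simp only [f, Set.indicator_of_notMem huT, zero_le]
  calc ∫⁻ u, (q (Metric.ball u (2 * s)))⁻¹ ∂q
      = ∫⁻ u, f u / q (Metric.ball u (2 * s)) ∂q :=
        lintegral_congr_ae <| hT.mono fun u hu => by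
          simp only [f, Set.indicator_of_mem (mem_closedBall_zero_iff.2 hu), Pi.one_apply, one_div]
    _ ≤ (∫⁻ z, ballSup s f z ∂ν) / ν (Metric.ball 0 s) :=
        lintegral_div_measure_ball_le ν q hs
          (measurable_one.indicator Metric.isClosed_closedBall.measurableSet)
    _ ≤ ν (Metric.closedBall 0 (T + s)) / ν (Metric.ball 0 s) := by
        gcongr
        exact (lintegral_mono hsup).trans_eq
          (lintegral_indicator_one Metric.isClosed_closedBall.measurableSet)

lemma lintegral_lintegral_sub_div_measure_ball_le (ν : Measure E) [ν.IsAddHaarMeasure]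
    (q : Measure E) [IsProbabilityMeasure q] {s : ℝ} (hs : 0 < s) {f : E → ℝ≥0∞}
    (hf : Measurable f) :
    ∫⁻ u, (∫⁻ v, f (u - v) ∂q) / q (Metric.ball u (2 * s)) ∂q ≤
      (∫⁻ z, ballSup s f z ∂ν) / ν (Metric.ball 0 s) := by
  have hsup (z : E) :
      ballSup s (fun u => ∫⁻ v, f (u - v) ∂q) z ≤ ∫⁻ v, ballSup s f (z - v) ∂q :=
    iSup₂_le fun u hu => lintegral_mono fun v =>
      le_ballSup (by rwa [dist_sub_right])
  refine (lintegral_div_measure_ball_le ν q hs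
    (Measurable.lintegral_prod_right (by fun_prop))).trans (ENNReal.div_le_div_right ?_ _)
  calc ∫⁻ z, ballSup s (fun u => ∫⁻ v, f (u - v) ∂q) z ∂ν
      ≤ ∫⁻ z, ∫⁻ v, ballSup s f (z - v) ∂q ∂ν := lintegral_mono hsup
    _ = ∫⁻ v, ∫⁻ z, ballSup s f (z - v) ∂ν ∂q :=
        lintegral_lintegral_swap
          ((measurable_ballSup s f).comp (measurable_fst.sub measurable_snd)).aemeasurable
    _ = ∫⁻ z, ballSup s f z ∂ν := by
        simp only [lintegral_sub_right_eq_self, lintegral_const, measure_univ, mul_one]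

lemma lintegral_add_div_mul_measure_ball_le (ν : Measure E) [ν.IsAddHaarMeasure] (q : Measure E)
    [IsProbabilityMeasure q] {s T : ℝ} (hs : 0 < s) (hT : ∀ᵐ u ∂q, ‖u‖ ≤ T) {f : E → ℝ≥0∞}
    (hf : Measurable f) {a b c : ℝ≥0∞} (hb0 : b ≠ 0) (hb : b ≠ ∞) :
    ∫⁻ u, (a + c * ∫⁻ v, f (u - v) ∂q) / (b * q (Metric.ball u (2 * s))) ∂q ≤
      (a * (ν (Metric.closedBall 0 (T + s)) / ν (Metric.ball 0 s)) +
        c * ((∫⁻ z, ballSup s f z ∂ν) / ν (Metric.ball 0 s))) / b := by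
  have hQ := measurable_measure_ball q (2 * s)
  have hJ : Measurable fun u => ∫⁻ v, f (u - v) ∂q :=
    Measurable.lintegral_prod_right (by fun_prop)
  calc ∫⁻ u, (a + c * ∫⁻ v, f (u - v) ∂q) / (b * q (Metric.ball u (2 * s))) ∂q
      = ∫⁻ u, (a * (q (Metric.ball u (2 * s)))⁻¹ +
          c * ((∫⁻ v, f (u - v) ∂q) / q (Metric.ball u (2 * s)))) * b⁻¹ ∂q := by
        refine lintegral_congr fun u => ?_
        rw [div_eq_mul_inv, div_eq_mul_inv, ENNReal.mul_inv (.inl hb0) (.inl hb)]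
        ring
    _ = (a * ∫⁻ u, (q (Metric.ball u (2 * s)))⁻¹ ∂q +
          c * ∫⁻ u, (∫⁻ v, f (u - v) ∂q) / q (Metric.ball u (2 * s)) ∂q) / b := by
        rw [lintegral_mul_const' _ _ (ENNReal.inv_ne_top.2 hb0),
          lintegral_add_left ?_, lintegral_const_mul _ ?_, lintegral_const_mul _ ?_,
          div_eq_mul_inv _ b]
        exacts [hJ.div hQ, hQ.inv, hQ.inv.const_mul a]
    _ ≤ _ := by
        gcongr
        · exact lintegral_inv_measure_ball_le ν q hs hT
        · exact lintegral_lintegral_sub_div_measure_ball_le ν q hs hf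

end BallSup

/-- A kernel with values in `[0, 1]` that is at least `b > 0` on the open ball of radius `ρ > 0`:
a regular kernel without its integrability requirement. -/
structure IsBoxKernel {E : Type*} [NormedAddCommGroup E] [MeasurableSpace E] (K : E → ℝ)
    (b ρ : ℝ) : Prop where
  b_pos : 0 < b
  rho_pos : 0 < ρ
  measurable : Measurable K
  nonneg : ∀ z, 0 ≤ K z
  le_one : ∀ z, K z ≤ 1
  le_of_norm_lt : ∀ z, ‖z‖ < ρ → b ≤ K z

/-- The Nadaraya–Watson estimator at the point `u` with kernel `K` and bandwidth `h`, for the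
sample `(U (ω i), Y (ω i))`. It is `0` where all the weights vanish. -/
noncomputable def nadarayaWatson {ι Ω E : Type*} [Fintype ι] [NormedAddCommGroup E]
    [NormedSpace ℝ E] (K : E → ℝ) (h : ℝ) (U : Ω → E) (Y : Ω → ℝ) (ω : ι → Ω) (u : E) : ℝ :=
  Finset.univ.centerMass (fun i => K (h⁻¹ • (u - U (ω i)))) fun i => Y (ω i)

section IntegratedRisk

open ProbabilityTheory
open scoped NNReal

variable {E : Type*} [NormedAddCommGroup E] {K : E → ℝ} {b ρ : ℝ}

lemma IsBoxKernel.mul_measure_ball_le_lintegral [MeasurableSpace E] [BorelSpace E]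
    (hK : IsBoxKernel K b ρ) (q : Measure E) (u : E) :
    ENNReal.ofReal b * q (Metric.ball u ρ) ≤ ∫⁻ v, ENNReal.ofReal (K (u - v)) ∂q := by
  rw [← setLIntegral_const]
  refine (setLIntegral_mono (by have := hK.measurable; fun_prop) fun v hv => ?_).trans
    (setLIntegral_le_lintegral _ _)
  exact ENNReal.ofReal_le_ofReal (hK.le_of_norm_lt _ (by rwa [← dist_eq_norm, dist_comm]))

variable [NormedSpace ℝ E]

lemma mul_sq_sub_le_of_lipschitzWith (hK0 : ∀ z, 0 ≤ K z) {φ : E → ℝ} {L : ℝ≥0}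
    (hφ : LipschitzWith L φ) {h : ℝ} (hh : h ≠ 0) (u v : E) :
    K (h⁻¹ • (u - v)) * (φ v - φ u) ^ 2 ≤
      L ^ 2 * h ^ 2 * (K (h⁻¹ • (u - v)) * ‖h⁻¹ • (u - v)‖ ^ 2) := by
  have hdist : |φ v - φ u| ≤ L * ‖u - v‖ := by
    simpa only [dist_eq_norm, Real.norm_eq_abs, norm_sub_rev v] using hφ.dist_le_mul v u
  have hsq : (φ v - φ u) ^ 2 ≤ (L * ‖u - v‖) ^ 2 := sq_le_sq' (abs_le.1 hdist).1 (abs_le.1 hdist).2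
  calc K (h⁻¹ • (u - v)) * (φ v - φ u) ^ 2
      ≤ K (h⁻¹ • (u - v)) * (L * ‖u - v‖) ^ 2 := mul_le_mul_of_nonneg_left hsq (hK0 _)
    _ = _ := by
        rw [norm_smul, Real.norm_eq_abs, mul_pow |h⁻¹|, sq_abs]
        field_simp

variable [mE : MeasurableSpace E] [BorelSpace E]

variable {ι Ω : Type*} [Fintype ι] [Nonempty ι] [MeasurableSpace Ω] {μ : Measure Ω}
  [IsProbabilityMeasure μ] {U : Ω → E} {Y : Ω → ℝ} {φ : E → ℝ} {L : ℝ≥0} {σ B : ℝ}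

lemma lintegral_nadarayaWatson_sub_sq_le (hK : IsBoxKernel K b ρ) (hU : Measurable U)
    (hY : MemLp Y 2 μ) (hφ : LipschitzWith L φ) (hφY : φ ∘ U =ᵐ[μ] μ[Y | mE.comap U])
    (hvar : Var[Y; μ | mE.comap U] ≤ᵐ[μ] fun _ => σ ^ 2) (hφB : ∀ a, |φ (U a)| ≤ B)
    {h : ℝ} (hh : h ≠ 0) (x : Ω) :
    ∫⁻ ω : ι → Ω, ENNReal.ofReal ((nadarayaWatson K h U Y ω (U x) - φ (U x)) ^ 2)
        ∂Measure.pi (fun _ => μ) ≤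
      (ENNReal.ofReal ((4 * σ ^ 2 + 8 * B ^ 2) / Fintype.card ι) +
        ENNReal.ofReal (2 * L ^ 2 * h ^ 2) *
          ∫⁻ v, ENNReal.ofReal (K (h⁻¹ • U x - v) * ‖h⁻¹ • U x - v‖ ^ 2)
            ∂μ.map fun a => h⁻¹ • U a) /
        (ENNReal.ofReal b * μ.map (fun a => h⁻¹ • U a) (Metric.ball (h⁻¹ • U x) ρ)) := by
  have hKm := hK.measurable
  have hφm := hφ.continuous.measurable
  have hhU : Measurable fun a => h⁻¹ • U a := by fun_prop
  refine (lintegral_centerMass_sub_sq_le (k := fun v => K (h⁻¹ • (U x - v))) hU (by fun_prop)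
    (fun _ => hK.nonneg _) (fun _ => hK.le_one _) hY hφm hφY hvar hφB (hφB x)).trans ?_
  refine ENNReal.div_le_div ?_ ?_
  · have hbias (a : Ω) : ENNReal.ofReal ((4 * σ ^ 2 + 8 * B ^ 2) / Fintype.card ι +
        2 * (K (h⁻¹ • (U x - U a)) * (φ (U a) - φ (U x)) ^ 2)) ≤
        ENNReal.ofReal ((4 * σ ^ 2 + 8 * B ^ 2) / Fintype.card ι) +
          ENNReal.ofReal (2 * L ^ 2 * h ^ 2) *
            ENNReal.ofReal (K (h⁻¹ • U x - h⁻¹ • U a) * ‖h⁻¹ • U x - h⁻¹ • U a‖ ^ 2) := by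
      rw [← ENNReal.ofReal_mul (by positivity), ← smul_sub]
      refine (ENNReal.ofReal_le_ofReal ?_).trans ENNReal.ofReal_add_le
      linarith [mul_sq_sub_le_of_lipschitzWith hK.nonneg hφ hh (U x) (U a)]
    refine (lintegral_mono hbias).trans_eq ?_
    rw [lintegral_add_left measurable_const, lintegral_const, measure_univ, mul_one,
      lintegral_const_mul _ (by fun_prop), lintegral_map (by fun_prop) hhU]
  · refine (hK.mul_measure_ball_le_lintegral _ _).trans_eq ?_
    simp only [lintegral_map (f := fun v => ENNReal.ofReal (K (h⁻¹ • U x - v))) (by fun_prop) hhU,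
      smul_sub]

lemma lintegral_lintegral_nadarayaWatson_sub_sq_le [ProperSpace E] (hK : IsBoxKernel K b ρ)
    (hU : Measurable U) {R : ℝ} (hR : ∀ a, ‖U a‖ ≤ R) (hY : MemLp Y 2 μ)
    (hφ : LipschitzWith L φ) (hφY : φ ∘ U =ᵐ[μ] μ[Y | mE.comap U])
    (hvar : Var[Y; μ | mE.comap U] ≤ᵐ[μ] fun _ => σ ^ 2) (hφB : ∀ a, |φ (U a)| ≤ B)
    {h : ℝ} (hh : 0 < h) (ν : Measure E) [ν.IsAddHaarMeasure] :
    ∫⁻ x, ∫⁻ ω : ι → Ω, ENNReal.ofReal ((nadarayaWatson K h U Y ω (U x) - φ (U x)) ^ 2)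
        ∂Measure.pi (fun _ => μ) ∂μ ≤
      (ENNReal.ofReal ((4 * σ ^ 2 + 8 * B ^ 2) / Fintype.card ι) *
          (ν (Metric.closedBall 0 (h⁻¹ * R + ρ / 2)) / ν (Metric.ball 0 (ρ / 2))) +
        ENNReal.ofReal (2 * L ^ 2 * h ^ 2) *
          ((∫⁻ z, ballSup (ρ / 2) (fun u => ENNReal.ofReal (K u * ‖u‖ ^ 2)) z ∂ν) /
            ν (Metric.ball 0 (ρ / 2)))) / ENNReal.ofReal b := by
  have hKm := hK.measurable
  have hhU : Measurable fun a => h⁻¹ • U a := by fun_prop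
  let q : Measure E := μ.map fun a => h⁻¹ • U a
  have hq : IsProbabilityMeasure q := Measure.isProbabilityMeasure_map hhU.aemeasurable
  have hf : Measurable fun u => ENNReal.ofReal (K u * ‖u‖ ^ 2) := by fun_prop
  have hsupp : ∀ᵐ u ∂q, ‖u‖ ≤ h⁻¹ * R := by
    refine (ae_map_iff hhU.aemeasurable (measurableSet_le (by fun_prop) measurable_const)).2
      (.of_forall fun x => ?_)
    rw [norm_smul, Real.norm_of_nonneg (inv_nonneg.2 hh.le)]
    exact mul_le_mul_of_nonneg_left (hR x) (inv_nonneg.2 hh.le)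
  have hcover := lintegral_add_div_mul_measure_ball_le ν q (half_pos hK.rho_pos) hsupp hf
    (a := ENNReal.ofReal ((4 * σ ^ 2 + 8 * B ^ 2) / Fintype.card ι))
    (c := ENNReal.ofReal (2 * L ^ 2 * h ^ 2)) (ENNReal.ofReal_pos.2 hK.b_pos).ne'
    ENNReal.ofReal_ne_top
  rw [mul_div_cancel₀ _ (two_ne_zero' ℝ), lintegral_map ?_ hhU] at hcover
  · exact (lintegral_mono fun x => lintegral_nadarayaWatson_sub_sq_le hK hU hY hφ hφY hvar hφB
      hh.ne' x).trans hcover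
  · exact (((Measurable.lintegral_prod_right (by fun_prop)).const_mul _).const_add _).div
      ((measurable_measure_ball q ρ).const_mul _)

end IntegratedRisk

section Rate

open ProbabilityTheory
open scoped NNReal

lemma rpow_neg_one_div_sq {x : ℝ} (hx : 0 ≤ x) (d : ℕ) :
    (x ^ (-(1 : ℝ) / (d + 2))) ^ 2 = x ^ (-(2 : ℝ) / (d + 2)) := by
  rw [← Real.rpow_natCast, ← Real.rpow_mul hx]
  congr 1
  push_cast
  ring

lemma rpow_neg_one_div_pow {x : ℝ} (hx : 0 ≤ x) (d : ℕ) :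
    (x ^ (-(1 : ℝ) / (d + 2))) ^ (d + 2) = x⁻¹ := by
  rw [← Real.rpow_natCast, ← Real.rpow_mul hx, ← Real.rpow_neg_one]
  congr 1
  push_cast
  field_simp

lemma pow_mul_inv_mul_add_div_pow_le {h R s : ℝ} (hh : 0 < h) (hh1 : h ≤ 1) (hR : 0 ≤ R)
    (hs : 0 < s) (d : ℕ) :
    h ^ (d + 2) * ((h⁻¹ * R + s) / s) ^ d ≤ (R / s + 1) ^ d * h ^ 2 := by
  have hdiv : (h⁻¹ * R + s) / s ≤ h⁻¹ * (R / s + 1) := by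
    rw [add_div, div_self hs.ne', mul_add, mul_div_assoc, mul_one]
    linarith [(one_le_inv₀ hh).2 hh1]
  calc h ^ (d + 2) * ((h⁻¹ * R + s) / s) ^ d
      ≤ h ^ (d + 2) * (h⁻¹ * (R / s + 1)) ^ d := by gcongr
    _ = (R / s + 1) ^ d * h ^ 2 := by
        rw [mul_pow, pow_add, inv_pow]
        field_simp

variable {E : Type*} [NormedAddCommGroup E] [NormedSpace ℝ E] [FiniteDimensional ℝ E]
  [mE : MeasurableSpace E] [BorelSpace E] (ν : Measure E) [ν.IsAddHaarMeasure]

lemma addHaar_closedBall_div_addHaar_ball {T s : ℝ} (hT : 0 ≤ T) (hs : 0 < s) :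
    ν (Metric.closedBall 0 T) / ν (Metric.ball 0 s) =
      ENNReal.ofReal ((T / s) ^ Module.finrank ℝ E) := by
  have hunit0 : ν (Metric.ball 0 1) ≠ 0 := (Metric.measure_ball_pos ν 0 one_pos).ne'
  rw [Measure.addHaar_closedBall ν 0 hT, Measure.addHaar_ball_of_pos ν 0 hs,
    ENNReal.mul_div_mul_right _ _ hunit0 measure_ball_lt_top.ne,
    ← ENNReal.ofReal_div_of_pos (by positivity), div_pow]

lemma lintegral_lintegral_nadarayaWatson_sub_sq_le_mul_sq {ι Ω : Type*} [Fintype ι] [Nonempty ι]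
    [MeasurableSpace Ω] {μ : Measure Ω} [IsProbabilityMeasure μ] {K : E → ℝ} {b ρ : ℝ}
    (hK : IsBoxKernel K b ρ)
    (hsup : ∫⁻ z, ballSup (ρ / 2) (fun u => ENNReal.ofReal (K u * ‖u‖ ^ 2)) z ∂ν ≠ ∞)
    {U : Ω → E} (hU : Measurable U) {R : ℝ} (hR : ∀ a, ‖U a‖ ≤ R) {Y : Ω → ℝ} (hY : MemLp Y 2 μ)
    {φ : E → ℝ} {L : ℝ≥0} (hφ : LipschitzWith L φ) (hφY : φ ∘ U =ᵐ[μ] μ[Y | mE.comap U])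
    {σ B : ℝ} (hvar : Var[Y; μ | mE.comap U] ≤ᵐ[μ] fun _ => σ ^ 2) (hφB : ∀ a, |φ (U a)| ≤ B)
    {h : ℝ} (hh : 0 < h) (hh1 : h ≤ 1)
    (hcard : h ^ (Module.finrank ℝ E + 2) = (Fintype.card ι : ℝ)⁻¹) :
    ∫⁻ x, ∫⁻ ω : ι → Ω, ENNReal.ofReal ((nadarayaWatson K h U Y ω (U x) - φ (U x)) ^ 2)
        ∂Measure.pi (fun _ => μ) ∂μ ≤
      ENNReal.ofReal (((4 * σ ^ 2 + 8 * B ^ 2) * (R / (ρ / 2) + 1) ^ Module.finrank ℝ E +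
        2 * L ^ 2 * ((∫⁻ z, ballSup (ρ / 2) (fun u => ENNReal.ofReal (K u * ‖u‖ ^ 2)) z ∂ν) /
          ν (Metric.ball 0 (ρ / 2))).toReal) / b * h ^ 2) := by
  have hρ : 0 < ρ / 2 := half_pos hK.rho_pos
  have hR0 : 0 ≤ R := (norm_nonneg _).trans (hR (nonempty_of_isProbabilityMeasure μ).some)
  have hT : 0 ≤ h⁻¹ * R + ρ / 2 := by positivity
  have hvol := mul_le_mul_of_nonneg_left
    (pow_mul_inv_mul_add_div_pow_le hh hh1 hR0 hρ (Module.finrank ℝ E))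
    (show 0 ≤ 4 * σ ^ 2 + 8 * B ^ 2 by positivity)
  refine (lintegral_lintegral_nadarayaWatson_sub_sq_le hK hU hR hY hφ hφY hvar hφB hh ν).trans ?_
  rw [addHaar_closedBall_div_addHaar_ball ν hT hρ, ← ENNReal.ofReal_toReal (ENNReal.div_ne_top hsup
      (Metric.measure_ball_pos ν 0 hρ).ne'),
    ← ENNReal.ofReal_mul (by positivity), ← ENNReal.ofReal_mul (by positivity),
    ← ENNReal.ofReal_add (by positivity) (by positivity), ← ENNReal.ofReal_div_of_pos hK.b_pos,
    ENNReal.toReal_ofReal ENNReal.toReal_nonneg, div_eq_mul_inv _ (Fintype.card ι : ℝ), ← hcard,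
    div_mul_eq_mul_div]
  refine ENNReal.ofReal_le_ofReal (div_le_div_of_nonneg_right ?_ hK.b_pos.le)
  linarith

end Rate

section Tail

lemma le_max_mul_exp_neg_rpow {E : Type*} [SeminormedAddCommGroup E] {K : E → ℝ} {α C R : ℝ}
    (hα : 0 ≤ α) (hK : ∀ z, K z ≤ 1) (htail : ∀ z, R ≤ ‖z‖ → K z ≤ C * Real.exp (-‖z‖ ^ α))
    (z : E) : K z ≤ max C (Real.exp (R ^ α)) * Real.exp (-‖z‖ ^ α) := by
  rcases le_total R ‖z‖ with hz | hz
  · exact (htail z hz).trans (mul_le_mul_of_nonneg_right (le_max_left _ _) (Real.exp_nonneg _))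
  · have hexp : Real.exp (‖z‖ ^ α) ≤ max C (Real.exp (R ^ α)) :=
      (Real.exp_le_exp.2 (Real.rpow_le_rpow (norm_nonneg z) hz hα)).trans (le_max_right _ _)
    calc K z ≤ Real.exp (‖z‖ ^ α) * Real.exp (-‖z‖ ^ α) := by
          rw [← Real.exp_add, add_neg_cancel, Real.exp_zero]
          exact hK z
      _ ≤ _ := mul_le_mul_of_nonneg_right hexp (Real.exp_nonneg _)

/- With `n ≥ p / α`, use `1 + t ≤ 2 (1 + t ^ α) ^ (1 / α)` and `(1 + s) ^ n ≤ n! e ^ (1 + s)`. -/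
lemma exists_exp_neg_rpow_le {α p : ℝ} (hα : 0 < α) (hp : 0 ≤ p) :
    ∃ A : ℝ, 0 ≤ A ∧ ∀ t : ℝ, 0 ≤ t → Real.exp (-t ^ α) ≤ A * (1 + t) ^ (-p) := by
  obtain ⟨n, hn⟩ := exists_nat_ge (p / α)
  refine ⟨2 ^ p * (n.factorial * Real.exp 1), by positivity, fun t ht => ?_⟩
  have hs : 1 ≤ 1 + t ^ α := le_add_of_nonneg_right (by positivity)
  have hbase : 1 + t ≤ 2 * (1 + t ^ α) ^ α⁻¹ := by
    have h1 : 1 ≤ (1 + t ^ α) ^ α⁻¹ := Real.one_le_rpow hs (by positivity)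
    have h2 : t ≤ (1 + t ^ α) ^ α⁻¹ :=
      (Real.le_rpow_inv_iff_of_pos ht (by positivity) hα).2 (by linarith)
    linarith
  have hpow : (1 + t) ^ p ≤ 2 ^ p * (n.factorial * Real.exp (1 + t ^ α)) := by
    calc (1 + t) ^ p ≤ (2 * (1 + t ^ α) ^ α⁻¹) ^ p := by gcongr
      _ = 2 ^ p * (1 + t ^ α) ^ (p / α) := by
          rw [Real.mul_rpow two_pos.le (by positivity), ← Real.rpow_mul (by positivity),
            inv_mul_eq_div]
      _ ≤ 2 ^ p * (1 + t ^ α) ^ n := by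
          rw [← Real.rpow_natCast]
          gcongr
      _ ≤ 2 ^ p * (n.factorial * Real.exp (1 + t ^ α)) := by
          gcongr
          exact (div_le_iff₀' (by positivity)).1
            (Real.pow_div_factorial_le_exp _ (by positivity) n)
  rw [Real.rpow_neg (by positivity), ← div_eq_mul_inv, le_div_iff₀ (by positivity)]
  calc Real.exp (-t ^ α) * (1 + t) ^ p
      ≤ Real.exp (-t ^ α) * (2 ^ p * (n.factorial * Real.exp (1 + t ^ α))) := by gcongr
    _ = 2 ^ p * (n.factorial * (Real.exp (-t ^ α) * Real.exp (1 + t ^ α))) := by ring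
    _ = 2 ^ p * (n.factorial * Real.exp 1) := by
        rw [← Real.exp_add, neg_add_eq_sub, add_sub_cancel_right]

variable {E : Type*} [NormedAddCommGroup E] [NormedSpace ℝ E] [FiniteDimensional ℝ E]
  [MeasurableSpace E] [BorelSpace E] (ν : Measure E) [ν.IsAddHaarMeasure]

lemma lintegral_ballSup_ne_top_of_le_rpow {f : E → ℝ} {A p s : ℝ} (hs : 0 ≤ s) (hA : 0 ≤ A)
    (hp : Module.finrank ℝ E < p) (hf : ∀ u, f u ≤ A * (1 + ‖u‖) ^ (-p)) :
    ∫⁻ z, ballSup s (fun u => ENNReal.ofReal (f u)) z ∂ν ≠ ∞ := by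
  have hp0 : 0 < p := (Nat.cast_nonneg _).trans_lt hp
  have hshift {u z : E} (hu : dist u z < s) :
      f u ≤ A * (1 + s) ^ p * (1 + ‖z‖) ^ (-p) := by
    have hz : 1 + ‖z‖ ≤ (1 + s) * (1 + ‖u‖) := by
      have := norm_sub_norm_le z u
      rw [← dist_eq_norm, dist_comm] at this
      nlinarith [norm_nonneg u]
    have hquot : (1 + ‖z‖) / (1 + s) ≤ 1 + ‖u‖ := (div_le_iff₀' (by positivity)).2 hz
    calc f u ≤ A * (1 + ‖u‖) ^ (-p) := hf u
      _ ≤ A * ((1 + ‖z‖) / (1 + s)) ^ (-p) := mul_le_mul_of_nonneg_left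
          (Real.rpow_le_rpow_of_nonpos (by positivity) hquot (neg_nonpos.2 hp0.le)) hA
      _ = A * (1 + s) ^ p * (1 + ‖z‖) ^ (-p) := by
          rw [Real.div_rpow (by positivity) (by positivity),
            Real.rpow_neg (by positivity : 0 ≤ 1 + s), div_inv_eq_mul, mul_comm (_ ^ (-p)),
            mul_assoc]
  refine ne_top_of_le_ne_top ?_
    (lintegral_mono fun z => iSup₂_le fun u hu => ENNReal.ofReal_le_ofReal (hshift hu))
  simp only [ENNReal.ofReal_mul (by positivity : 0 ≤ A * (1 + s) ^ p)]
  rw [lintegral_const_mul' _ _ ENNReal.ofReal_ne_top]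
  exact ENNReal.mul_ne_top ENNReal.ofReal_ne_top (finite_integral_one_add_norm hp).ne

lemma lintegral_ballSup_mul_norm_sq_ne_top {K : E → ℝ} {α C R s : ℝ} (hα : 0 < α)
    (hK : ∀ z, K z ≤ 1) (htail : ∀ z, R ≤ ‖z‖ → K z ≤ C * Real.exp (-‖z‖ ^ α)) (hs : 0 ≤ s) :
    ∫⁻ z, ballSup s (fun u => ENNReal.ofReal (K u * ‖u‖ ^ 2)) z ∂ν ≠ ∞ := by
  let p : ℝ := Module.finrank ℝ E + 1
  obtain ⟨A, hA, hexp⟩ := exists_exp_neg_rpow_le (p := p + 2) hα (by positivity)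
  have hC : 0 < max C (Real.exp (R ^ α)) := lt_max_of_lt_right (Real.exp_pos _)
  refine lintegral_ballSup_ne_top_of_le_rpow ν hs (mul_nonneg hC.le hA)
    (show (Module.finrank ℝ E : ℝ) < p from lt_add_one _) fun u => ?_
  have hu : 0 < 1 + ‖u‖ := by positivity
  calc K u * ‖u‖ ^ 2
      ≤ max C (Real.exp (R ^ α)) * (A * (1 + ‖u‖) ^ (-(p + 2))) * (1 + ‖u‖) ^ 2 := by
        refine mul_le_mul ((le_max_mul_exp_neg_rpow hα.le hK htail u).trans
          (mul_le_mul_of_nonneg_left (hexp _ (norm_nonneg u)) hC.le)) ?_ (by positivity)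
          (by positivity)
        exact pow_le_pow_left₀ (norm_nonneg u) (le_add_of_nonneg_left zero_le_one) 2
    _ = max C (Real.exp (R ^ α)) * A * ((1 + ‖u‖) ^ (-(p + 2)) * (1 + ‖u‖) ^ (2 : ℝ)) := by
        rw [Real.rpow_two]
        ring
    _ = max C (Real.exp (R ^ α)) * A * (1 + ‖u‖) ^ (-p) := by
        rw [← Real.rpow_add hu, neg_add, neg_add_cancel_right]

end Tail

section OracleInequality

open ProbabilityTheory
open scoped NNReal

variable {E : Type*} [NormedAddCommGroup E] [NormedSpace ℝ E] [mE : MeasurableSpace E]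
  [BorelSpace E] {K : E → ℝ} {h : ℝ} {ι Ω : Type*} [Fintype ι] {m m₀ : MeasurableSpace Ω}
  {μ : Measure Ω} {U : Ω → E} {Y : Ω → ℝ}

lemma measurable_nadarayaWatson (hK : Measurable K) (ω : ι → Ω) :
    Measurable (nadarayaWatson K h U Y ω) := by
  change Measurable fun u => nadarayaWatson K h U Y ω u
  simp only [nadarayaWatson, centerMass_eq_sum_div]
  fun_prop

variable [IsProbabilityMeasure μ]

lemma memLp_nadarayaWatson_comp (hK : Measurable K) (hK0 : ∀ z, 0 ≤ K z)
    (hU : Measurable U) (ω : ι → Ω) (p : ℝ≥0∞) :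
    MemLp (fun x => nadarayaWatson K h U Y ω (U x)) p μ := by
  refine MemLp.of_bound ((measurable_nadarayaWatson hK ω).comp hU).aestronglyMeasurable
    (∑ i, |Y (ω i)|) (.of_forall fun x => ?_)
  exact abs_centerMass_le (fun i => hK0 _) (Finset.sum_nonneg fun i _ => abs_nonneg _) fun i =>
    Finset.single_le_sum (f := fun i => |Y (ω i)|) (fun j _ => abs_nonneg _) (Finset.mem_univ i)

lemma aemeasurable_nadarayaWatson_prod [SecondCountableTopology E] (hK : Measurable K)
    (hU : Measurable U) (hY : AEMeasurable Y μ) :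
    AEMeasurable (fun p : (ι → Ω) × Ω => nadarayaWatson K h U Y p.1 (U p.2))
      ((Measure.pi fun _ => μ).prod μ) := by
  have hYi (i : ι) : AEMeasurable (fun p : (ι → Ω) × Ω => Y (p.1 i))
      ((Measure.pi fun _ => μ).prod μ) :=
    hY.comp_quasiMeasurePreserving
      ((Measure.quasiMeasurePreserving_eval (fun _ => μ) i).comp Measure.quasiMeasurePreserving_fst)
  simp only [nadarayaWatson, centerMass_eq_sum_div]
  exact Finset.aemeasurable_fun_sum _ fun i _ => (Measurable.aemeasurable (by fun_prop)).mul (hYi i)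

/- The estimator at a fixed sample is a function of `U`, so `integral_sub_sq_condExp_le` applies
sample by sample. -/
lemma lintegral_nadarayaWatson_sub_sq_condExp_le (hK : Measurable K)
    (hK0 : ∀ z, 0 ≤ K z) (hU : Measurable U) (hY : MemLp Y 2 μ) {φ : E → ℝ}
    (hφY : φ ∘ U =ᵐ[μ] μ[Y | mE.comap U]) (hUm : mE.comap U ≤ m)
    (hm : m ≤ m₀) {f : E → ℝ} (hf : Measurable f) (hfU : MemLp (f ∘ U) 2 μ) (ω : ι → Ω) :
    ∫⁻ x, ENNReal.ofReal ((nadarayaWatson K h U Y ω (U x) - (μ[Y | m]) x) ^ 2) ∂μ ≤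
      ENNReal.ofReal (∫ x, (f (U x) - (μ[Y | m]) x) ^ 2 ∂μ) +
        ∫⁻ x, ENNReal.ofReal ((nadarayaWatson K h U Y ω (U x) - φ (U x)) ^ 2) ∂μ := by
  have hW := memLp_nadarayaWatson_comp (h := h) (Y := Y) (μ := μ) hK hK0 hU ω 2
  have hcomap {g : E → ℝ} (hg : Measurable g) : StronglyMeasurable[mE.comap U] fun x => g (U x) :=
    (hg.comp (comap_measurable U)).stronglyMeasurable
  have hφU : MemLp (φ ∘ U) 2 μ := (hY.condExp one_le_two).ae_eq hφY.symm
  have hpyth := integral_sub_sq_condExp_le hUm hm (hcomap (measurable_nadarayaWatson hK ω))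
    (hcomap hf) hW hfU hY
  have hφ : ∫ x, (nadarayaWatson K h U Y ω (U x) - (μ[Y | mE.comap U]) x) ^ 2 ∂μ =
      ∫ x, (nadarayaWatson K h U Y ω (U x) - φ (U x)) ^ 2 ∂μ :=
    integral_congr_ae <| hφY.mono fun x hx => by simp only [← hx, Function.comp_apply]
  have hWY : Integrable (fun x => (nadarayaWatson K h U Y ω (U x) - (μ[Y | m]) x) ^ 2) μ :=
    (hW.sub (hY.condExp one_le_two)).integrable_sq
  have hWφ : Integrable (fun x => (nadarayaWatson K h U Y ω (U x) - φ (U x)) ^ 2) μ :=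
    (hW.sub hφU).integrable_sq
  rw [← ofReal_integral_eq_lintegral_ofReal hWY (.of_forall fun x => sq_nonneg _),
    ← ofReal_integral_eq_lintegral_ofReal hWφ (.of_forall fun x => sq_nonneg _),
    ← ENNReal.ofReal_add (integral_nonneg fun x => sq_nonneg _)
      (integral_nonneg fun x => sq_nonneg _), ← hφ]
  exact ENNReal.ofReal_le_ofReal hpyth

lemma integral_nadarayaWatson_sub_sq_condExp_le [SecondCountableTopology E] (hK : Measurable K)
    (hK0 : ∀ z, 0 ≤ K z) (hU : Measurable U) (hY : MemLp Y 2 μ) {φ : E → ℝ} (hφ : Measurable φ)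
    (hφY : φ ∘ U =ᵐ[μ] μ[Y | mE.comap U]) (hUm : mE.comap U ≤ m)
    (hm : m ≤ m₀) {f : E → ℝ} (hf : Measurable f) (hfU : MemLp (f ∘ U) 2 μ) {ε : ℝ} (hε : 0 ≤ ε)
    (hrisk : ∫⁻ x, ∫⁻ ω : ι → Ω, ENNReal.ofReal
      ((nadarayaWatson K h U Y ω (U x) - φ (U x)) ^ 2) ∂Measure.pi (fun _ => μ) ∂μ ≤
        ENNReal.ofReal ε) :
    ∫ p : (ι → Ω) × Ω, (nadarayaWatson K h U Y p.1 (U p.2) - (μ[Y | m]) p.2) ^ 2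
        ∂(Measure.pi fun _ => μ).prod μ ≤
      ∫ x, (f (U x) - (μ[Y | m]) x) ^ 2 ∂μ + ε := by
  have hnw := aemeasurable_nadarayaWatson_prod (ι := ι) (h := h) hK hU
    hY.aestronglyMeasurable.aemeasurable
  have hcond : Measurable fun x => (μ[Y | m]) x := (stronglyMeasurable_condExp.mono hm).measurable
  have hbest : 0 ≤ ∫ x, (f (U x) - (μ[Y | m]) x) ^ 2 ∂μ := integral_nonneg fun x => sq_nonneg _
  have hmeas : AEMeasurable (fun p : (ι → Ω) × Ω =>
      (nadarayaWatson K h U Y p.1 (U p.2) - (μ[Y | m]) p.2) ^ 2)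
      ((Measure.pi fun _ => μ).prod μ) :=
    (hnw.sub (hcond.comp measurable_snd).aemeasurable).pow_const 2
  have hswap : AEMeasurable (fun p : (ι → Ω) × Ω => ENNReal.ofReal
      ((nadarayaWatson K h U Y p.1 (U p.2) - φ (U p.2)) ^ 2)) ((Measure.pi fun _ => μ).prod μ) :=
    ((hnw.sub (Measurable.aemeasurable (by fun_prop))).pow_const 2).ennreal_ofReal
  rw [integral_eq_lintegral_of_nonneg_ae (.of_forall fun p => sq_nonneg _)
    hmeas.aestronglyMeasurable]
  refine ENNReal.toReal_le_of_le_ofReal (add_nonneg hbest hε) ?_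
  calc ∫⁻ p : (ι → Ω) × Ω, ENNReal.ofReal
          ((nadarayaWatson K h U Y p.1 (U p.2) - (μ[Y | m]) p.2) ^ 2)
        ∂(Measure.pi fun _ => μ).prod μ
      ≤ ∫⁻ ω : ι → Ω, ∫⁻ x, ENNReal.ofReal
          ((nadarayaWatson K h U Y ω (U x) - (μ[Y | m]) x) ^ 2) ∂μ ∂Measure.pi fun _ => μ :=
        lintegral_prod_le _
    _ ≤ ∫⁻ ω : ι → Ω, (ENNReal.ofReal (∫ x, (f (U x) - (μ[Y | m]) x) ^ 2 ∂μ) +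
          ∫⁻ x, ENNReal.ofReal ((nadarayaWatson K h U Y ω (U x) - φ (U x)) ^ 2) ∂μ)
          ∂Measure.pi fun _ => μ := lintegral_mono fun ω =>
        lintegral_nadarayaWatson_sub_sq_condExp_le hK hK0 hU hY hφY hUm hm hf hfU ω
    _ = ENNReal.ofReal (∫ x, (f (U x) - (μ[Y | m]) x) ^ 2 ∂μ) +
          ∫⁻ x, ∫⁻ ω : ι → Ω, ENNReal.ofReal ((nadarayaWatson K h U Y ω (U x) - φ (U x)) ^ 2)
            ∂Measure.pi (fun _ => μ) ∂μ := by
        rw [lintegral_add_left measurable_const, lintegral_const, measure_univ, mul_one,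
          lintegral_lintegral_swap hswap]
    _ ≤ _ := by
        rw [ENNReal.ofReal_add hbest hε]
        gcongr

theorem exists_integral_nadarayaWatson_sub_sq_condExp_le [FiniteDimensional ℝ E] (ν : Measure E)
    [ν.IsAddHaarMeasure] {b ρ : ℝ} (hK : IsBoxKernel K b ρ)
    (hsup : ∫⁻ z, ballSup (ρ / 2) (fun u => ENNReal.ofReal (K u * ‖u‖ ^ 2)) z ∂ν ≠ ∞)
    (hU : Measurable U) {R : ℝ} (hR : ∀ a, ‖U a‖ ≤ R) (hY : MemLp Y 2 μ) {φ : E → ℝ} {L : ℝ≥0}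
    (hφ : LipschitzWith L φ) (hφY : φ ∘ U =ᵐ[μ] μ[Y | mE.comap U]) {σ : ℝ}
    (hvar : Var[Y; μ | mE.comap U] ≤ᵐ[μ] fun _ => σ ^ 2) (hUm : mE.comap U ≤ m) (hm : m ≤ m₀) :
    ∃ C : ℝ, 0 < C ∧ ∀ ℓ : ℕ, 1 ≤ ℓ → ∀ f : E → ℝ, Measurable f → MemLp (f ∘ U) 2 μ →
      ∫ p : (Fin ℓ → Ω) × Ω,
          (nadarayaWatson K ((ℓ : ℝ) ^ (-(1 : ℝ) / (Module.finrank ℝ E + 2))) U Y p.1 (U p.2) -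
            (μ[Y | m]) p.2) ^ 2 ∂(Measure.pi fun _ => μ).prod μ ≤
        ∫ x, (f (U x) - (μ[Y | m]) x) ^ 2 ∂μ +
          C * (ℓ : ℝ) ^ (-(2 : ℝ) / (Module.finrank ℝ E + 2)) := by
  have hφB (a : Ω) : |φ (U a)| ≤ |φ 0| + L * R := by
    have hdist : |φ (U a) - φ 0| ≤ L * ‖U a‖ := by
      simpa only [dist_eq_norm, sub_zero, Real.norm_eq_abs] using hφ.dist_le_mul (U a) 0
    have hLR : L * ‖U a‖ ≤ L * R := mul_le_mul_of_nonneg_left (hR a) L.2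
    linarith [abs_sub_abs_le_abs_sub (φ (U a)) (φ 0)]
  have hR0 : 0 ≤ R := (norm_nonneg _).trans (hR (nonempty_of_isProbabilityMeasure μ).some)
  have hb := hK.b_pos
  have hρ := hK.rho_pos
  let C : ℝ := ((4 * σ ^ 2 + 8 * (|φ 0| + L * R) ^ 2) *
    (R / (ρ / 2) + 1) ^ Module.finrank ℝ E +
      2 * L ^ 2 * ((∫⁻ z, ballSup (ρ / 2) (fun u => ENNReal.ofReal (K u * ‖u‖ ^ 2)) z ∂ν) /
        ν (Metric.ball 0 (ρ / 2))).toReal) / b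
  refine ⟨C + 1, by positivity, fun ℓ hℓ f hf hfU => ?_⟩
  have := Fin.pos_iff_nonempty.1 hℓ
  have hℓ1 : (1 : ℝ) ≤ ℓ := Nat.one_le_cast.2 hℓ
  have hℓ0 : (0 : ℝ) < ℓ := one_pos.trans_le hℓ1
  have hexp : -(1 : ℝ) / (Module.finrank ℝ E + 2) ≤ 0 :=
    div_nonpos_of_nonpos_of_nonneg (by norm_num) (by positivity)
  refine integral_nadarayaWatson_sub_sq_condExp_le hK.measurable hK.nonneg hU hY
    hφ.continuous.measurable hφY hUm hm hf hfU (by positivity)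
    ((lintegral_lintegral_nadarayaWatson_sub_sq_le_mul_sq ν hK hsup hU hR hY hφ hφY hvar hφB
      (Real.rpow_pos_of_pos hℓ0 _) (Real.rpow_le_one_of_one_le_of_nonpos hℓ1 hexp) ?_).trans
      (ENNReal.ofReal_le_ofReal ?_))
  · rw [rpow_neg_one_div_pow hℓ0.le, Fintype.card_fin]
  · rw [rpow_neg_one_div_sq hℓ0.le]
    exact mul_le_mul_of_nonneg_right (lt_add_one C).le (by positivity)

end OracleInequality

section Aggregation

open ProbabilityTheory
open scoped NNReal

lemma IsRegularKernel.isBoxKernel {M : ℕ} {K : EuclideanSpace ℝ (Fin M) → ℝ} {b ρ κ₀ : ℝ}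
    (hK : IsRegularKernel K b ρ κ₀) : IsBoxKernel K b ρ :=
  ⟨hK.b_pos, hK.rho_pos, hK.measurable, hK.nonneg, hK.le_one, hK.lower⟩

lemma aggEstimator_eq_nadarayaWatson {Ω : Type*} {d M ℓ : ℕ} (K : EuclideanSpace ℝ (Fin M) → ℝ)
    (h : ℝ) (r : (Fin d → ℝ) → EuclideanSpace ℝ (Fin M)) (X : Ω → Fin d → ℝ) (Y : Ω → ℝ)
    (ωs : Fin ℓ → Ω) (x : Fin d → ℝ) :
    aggEstimator K h r X Y ωs x = nadarayaWatson K h (r ∘ X) Y ωs (r x) :=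
  (centerMass_eq_sum_div _ _).symm

lemma condVar_ae_le_sq_of_abs_le {Ω : Type*} {m m₀ : MeasurableSpace Ω} {μ : Measure Ω}
    [IsFiniteMeasure μ] {Y : Ω → ℝ} {R : ℝ} (hm : m ≤ m₀) (hY : MemLp Y 2 μ)
    (hYR : ∀ᵐ ω ∂μ, |Y ω| ≤ R) : Var[Y; μ | m] ≤ᵐ[μ] fun _ => R ^ 2 := by
  refine (condVar_ae_le_condExp_sq hm hY).trans ?_
  rw [← condExp_const (μ := μ) hm (R ^ 2)]
  exact condExp_mono hY.integrable_sq (integrable_const _) <|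
    hYR.mono fun ω hω => sq_le_sq' (abs_le.1 hω).1 (abs_le.1 hω).2

theorem aggEstimator_risk_rate_general
    {Ω : Type*} [MeasurableSpace Ω] (μ : Measure Ω) [IsProbabilityMeasure μ] {d M : ℕ}
    {K : EuclideanSpace ℝ (Fin M) → ℝ} {b ρ : ℝ} (hK : IsBoxKernel K b ρ)
    (hsup : ∫⁻ z, ballSup (ρ / 2) (fun u => ENNReal.ofReal (K u * ‖u‖ ^ 2)) z ≠ ∞)
    {X : Ω → Fin d → ℝ} {Y : Ω → ℝ} (hX : Measurable X) (hY : MemLp Y 2 μ)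
    {r : (Fin d → ℝ) → EuclideanSpace ℝ (Fin M)} (hr : Measurable r)
    {R : ℝ} (hrBdd : ∀ x, ‖r x‖ ≤ R) {σ : ℝ}
    (hvar : Var[Y; μ | MeasurableSpace.comap (fun ω => r (X ω)) inferInstance] ≤ᵐ[μ]
      fun _ => σ ^ 2)
    {G : EuclideanSpace ℝ (Fin M) → ℝ} {L : ℝ≥0} (hGLip : LipschitzWith L G)
    (hGCE : (fun ω => G (r (X ω))) =ᵐ[μ]
      μ[Y | MeasurableSpace.comap (fun ω => r (X ω)) inferInstance])
    {gstar : (Fin d → ℝ) → ℝ}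
    (hgstarCE : (fun ω => gstar (X ω)) =ᵐ[μ] μ[Y | MeasurableSpace.comap X inferInstance]) :
    ∃ C : ℝ, 0 < C ∧ ∀ ℓ : ℕ, 1 ≤ ℓ → ∀ f : EuclideanSpace ℝ (Fin M) → ℝ, Measurable f →
      MemLp (fun ω => f (r (X ω))) 2 μ →
      ∫ ω : (Fin ℓ → Ω) × Ω,
          |aggEstimator K ((ℓ : ℝ) ^ (-(1 : ℝ) / ((M : ℝ) + 2))) r X Y ω.1 (X ω.2)
              - gstar (X ω.2)| ^ 2
          ∂((Measure.pi fun _ : Fin ℓ => μ).prod μ)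
        ≤ ∫ ω, |f (r (X ω)) - gstar (X ω)| ^ 2 ∂μ
          + C * (ℓ : ℝ) ^ (-(2 : ℝ) / ((M : ℝ) + 2)) := by
  obtain ⟨C, hC, hrisk⟩ := exists_integral_nadarayaWatson_sub_sq_condExp_le volume hK hsup
    (hr.comp hX) (fun ω => hrBdd (X ω)) hY hGLip hGCE hvar
    (hr.comp (comap_measurable X)).comap_le hX.comap_le
  refine ⟨C, hC, fun ℓ hℓ f hf hfr => ?_⟩
  convert hrisk ℓ hℓ f hf hfr using 1
  · refine integral_congr_ae <|
      (Measure.quasiMeasurePreserving_snd.ae hgstarCE).mono fun p hp => ?_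
    simp only [sq_abs, aggEstimator_eq_nadarayaWatson, finrank_euclideanSpace, Fintype.card_fin,
      ← hp, Function.comp_apply]
  · congr 1
    · exact integral_congr_ae <| hgstarCE.mono fun ω hω => by
        simp only [sq_abs, ← hω, Function.comp_apply]
    · simp only [finrank_euclideanSpace, Fintype.card_fin]

end Aggregation

/-- (Theorem 1.)  Let `K` be a regular kernel with constants
`b, ρ, κ₀` satisfying moreover the tail bound `K(z) ≤ C_K·exp(−‖z‖^α)` for `‖z‖ ≥ R_K`
(with `α, R_K, C_K > 0`).  Assume `|Y| ≤ R` a.s. and `‖r(x)‖ ≤ R` for all `x`, that `G`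
is `L`-Lipschitz with `G(r(X))` a version of `E[Y | r(X)]`, and let `g*(X)` be a version
of `E[Y|X]`.  Then, choosing `h = ℓ^{−1/(M+2)}`, there is `C > 0` independent of `ℓ` with
`E[|g_n(r(X)) − g*(X)|²] ≤ min_{1≤m≤M} E[|r_m(X) − g*(X)|²] + C·ℓ^{−2/(M+2)}` for every
`ℓ ≥ 1`, the expectation being over both `X` and the sample `(X_i,Y_i)_{i=1}^ℓ`. -/
theorem aggEstimator_risk_rate
    {Ω : Type*} [MeasurableSpace Ω] (μ : Measure Ω) [IsProbabilityMeasure μ]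
    {d M : ℕ} (hM : 0 < M)
    (K : EuclideanSpace ℝ (Fin M) → ℝ) (b ρ κ₀ : ℝ)
    (hK : IsRegularKernel K b ρ κ₀)
    (α R_K C_K : ℝ) (hα : 0 < α) (hR_K : 0 < R_K) (hC_K : 0 < C_K)
    (htail : ∀ z : EuclideanSpace ℝ (Fin M), R_K ≤ ‖z‖ →
      K z ≤ C_K * Real.exp (-‖z‖ ^ α))
    (X : Ω → Fin d → ℝ) (Y : Ω → ℝ) (hX : Measurable X) (hY : Measurable Y)
    (hY2 : Integrable (fun ω => (Y ω) ^ 2) μ)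
    (R : ℝ) (hR : 0 < R) (hYbdd : ∀ᵐ ω ∂μ, |Y ω| ≤ R)
    (r : (Fin d → ℝ) → EuclideanSpace ℝ (Fin M)) (hr : Measurable r)
    (hrBdd : ∀ x, ‖r x‖ ≤ R)
    (L : ℝ) (hL : 0 ≤ L)
    (G : EuclideanSpace ℝ (Fin M) → ℝ) (hGLip : LipschitzWith L.toNNReal G)
    (hGCE : (fun ω => G (r (X ω))) =ᵐ[μ]
      μ[Y | MeasurableSpace.comap (fun ω => r (X ω)) inferInstance])
    (gstar : (Fin d → ℝ) → ℝ) (hgstar : Measurable gstar)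
    (hgstarCE : (fun ω => gstar (X ω)) =ᵐ[μ]
      μ[Y | MeasurableSpace.comap X inferInstance]) :
    ∃ C : ℝ, 0 < C ∧ ∀ ℓ : ℕ, 1 ≤ ℓ →
      ∫ ω : (Fin ℓ → Ω) × Ω,
          |aggEstimator K ((ℓ : ℝ) ^ (-(1 : ℝ) / ((M : ℝ) + 2))) r X Y ω.1 (X ω.2)
              - gstar (X ω.2)| ^ 2
          ∂((Measure.pi fun _ : Fin ℓ => μ).prod μ)
        ≤ (⨅ m : Fin M, ∫ ω, |r (X ω) m - gstar (X ω)| ^ 2 ∂μ)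
          + C * (ℓ : ℝ) ^ (-(2 : ℝ) / ((M : ℝ) + 2)) := by
  have hY2' : MemLp Y 2 μ := (memLp_two_iff_integrable_sq hY.aestronglyMeasurable).2 hY2
  have hvar := condVar_ae_le_sq_of_abs_le (hr.comp hX).comap_le hY2' hYbdd
  have hsup := lintegral_ballSup_mul_norm_sq_ne_top volume hα hK.le_one htail
    (half_pos hK.rho_pos).le
  obtain ⟨C, hC, hrisk⟩ := aggEstimator_risk_rate_general μ hK.isBoxKernel hsup hX hY2' hr hrBdd
    hvar hGLip hGCE hgstarCE
  have hproj (m : Fin M) : Measurable fun z : EuclideanSpace ℝ (Fin M) => z m := by fun_prop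
  have hcoord (m : Fin M) : MemLp (fun ω => r (X ω) m) 2 μ :=
    MemLp.of_bound ((hproj m).comp (hr.comp hX)).aestronglyMeasurable R
      (.of_forall fun ω => (PiLp.norm_apply_le (r (X ω)) m).trans (hrBdd _))
  have : Nonempty (Fin M) := Fin.pos_iff_nonempty.1 hM
  exact ⟨C, hC, fun ℓ hℓ =>
    le_ciInf_add fun m => hrisk ℓ hℓ (fun z => z m) (hproj m) (hcoord m)⟩
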